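/- Fix integers m ≥ 2, w ≥ 3, s ≥ 2w, and assume d ≥ 2s−1. Fix distinct lines D, R ⊂ ℙ^m with D ∩ R ≠ ∅; set {O} := D ∩ R and let U be the plane spanned by D ∪ R. Let E ⊂ U be a general subset with #E = s−2w. Let A_1 ⊂ D be the zero-dimensional degree-w subscheme of D supported at O; fix O' ∈ R ∖ {O} and let A_2 ⊂ R be the zero-dimensional degree-w subscheme of R supported at O'. Then there is a point P ∈ ⟨ν_d(A_1 ∪ A_2 ∪ E)⟩ such that br(P) = s and sr(P) = 2d+3+s−4w. -/

import Mathlib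

open scoped LinearAlgebra.Projectivization

noncomputable section

/-- The polynomial ring in `m+1` variables over `K`: homogeneous coordinate ring of `ℙ^m`. -/
abbrev PR (K : Type) [Field K] (m : ℕ) : Type := MvPolynomial (Fin (m+1)) K

/-- The space of degree-`d` forms in `m+1` variables. -/
abbrev Hd (K : Type) [Field K] (m d : ℕ) : Submodule K (PR K m) :=
  MvPolynomial.homogeneousSubmodule (Fin (m+1)) K d

/-- Projective `m`-space over `K`. -/
abbrev Pm (K : Type) [Field K] (m : ℕ) := ℙ K (Fin (m+1) → K)

/-- The target projective space `ℙ^n`, `n = C(m+d,m) - 1`, of the degree-`d` Veronese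
embedding, realized as the projectivization of the dual of the space of degree-`d` forms
(the space of degree-`d` symmetric tensors). -/
abbrev PN (K : Type) [Field K] (m d : ℕ) := ℙ K (Module.Dual K (Hd K m d))

variable {K : Type} [Field K] {m : ℕ}

/-- Hilbert function of `R/I` in degree `t`. -/
def hilbQ (I : Ideal (PR K m)) (t : ℕ) : ℕ :=
  Module.finrank K ((Hd K m t).map (Ideal.Quotient.mkₐ K I).toLinearMap)

/-- The degree (length) of the projective scheme defined by `I`: the eventual value of the
Hilbert function of `R/I`. -/
def idealDeg (I : Ideal (PR K m)) : ℕ := Filter.limsup (fun t => hilbQ I t) Filter.atTop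

/-- `h^1(𝓘_Z(d))` for the zero-dimensional scheme `Z` with (saturated) ideal `I`:
it equals `deg Z - dim (R/I)_d`. -/
def h1I (I : Ideal (PR K m)) (d : ℕ) : ℕ := idealDeg I - hilbQ I d

/-- An ideal is homogeneous. -/
def IsHomogI (I : Ideal (PR K m)) : Prop :=
  ∀ f ∈ I, ∀ n : ℕ, MvPolynomial.homogeneousComponent n f ∈ I

/-- An ideal is saturated with respect to the irrelevant maximal ideal. -/
def IsSatI (I : Ideal (PR K m)) : Prop :=
  ∀ f : PR K m, (∀ i, MvPolynomial.X i * f ∈ I) → f ∈ I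

/-- A closed subscheme of `ℙ^m`, given by its saturated homogeneous ideal. -/
structure PSub (K : Type) [Field K] (m : ℕ) where
  I : Ideal (PR K m)
  homog : IsHomogI I
  sat : IsSatI I

/-- A (closed sub)scheme is zero-dimensional iff the Hilbert function of `R/I` is bounded. -/
def IsZeroDimI (I : Ideal (PR K m)) : Prop := ∃ C, ∀ t, hilbQ I t ≤ C

/-- A polynomial vanishes at a projective point (every homogeneous component vanishes
at a representative). -/
def vanishesAt (f : PR K m) (a : Pm K m) : Prop :=
  ∀ n : ℕ, MvPolynomial.eval a.rep (MvPolynomial.homogeneousComponent n f) = 0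

/-- Zero locus of an ideal in `ℙ^m`. -/
def pzeroLocus (I : Ideal (PR K m)) : Set (Pm K m) := {a | ∀ f ∈ I, vanishesAt f a}

/-- The (saturated) homogeneous ideal of a set of points of `ℙ^m`. -/
def idealOfSet (S : Set (Pm K m)) : Ideal (PR K m) :=
  Ideal.span {f : PR K m | (∃ n, f.IsHomogeneous n) ∧ ∀ a ∈ S, MvPolynomial.eval a.rep f = 0}

/-- Saturation of a homogeneous ideal: the smallest saturated homogeneous ideal containing it. -/
def satIdeal (J : Ideal (PR K m)) : Ideal (PR K m) := sInf {J' | J ≤ J' ∧ IsHomogI J' ∧ IsSatI J'}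

/-- The scheme defined by the (saturated) ideal `I` is reduced. -/
def IsReducedI (I : Ideal (PR K m)) : Prop := I = idealOfSet (pzeroLocus I)

/-- Connected component of a zero-dimensional scheme at a point `a`: the largest subscheme
supported at `a`, i.e. the `a`-primary component. -/
def componentAt (I : Ideal (PR K m)) (a : Pm K m) : Ideal (PR K m) :=
  sInf {J | I ≤ J ∧ IsHomogI J ∧ IsSatI J ∧ pzeroLocus J ⊆ {a}}

/-- Residual scheme of `Z` with respect to the hypersurface `f = 0`: the colon ideal `(I_Z : f)`. -/
def resIdeal (I : Ideal (PR K m)) (f : PR K m) : Ideal (PR K m) :=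
  Submodule.colon I (Ideal.span {f})

/-- Degree of the scheme-theoretic intersection of the subschemes defined by `I` and `J`. -/
def interDeg (I J : Ideal (PR K m)) : ℕ := idealDeg (I ⊔ J)

/-- The degree-`d` Veronese image of a vector `v`: the evaluation-at-`v` functional on
degree-`d` forms. -/
def nu (d : ℕ) (v : Fin (m+1) → K) : Module.Dual K (Hd K m d) :=
  (MvPolynomial.aeval v).toLinearMap ∘ₗ (Hd K m d).subtype

/-- The linear span of the Veronese image `ν_d(S)` of a set `S` of points of `ℙ^m`. -/
def dualSpan (d : ℕ) (S : Set (Pm K m)) : Submodule K (Module.Dual K (Hd K m d)) :=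
  Submodule.span K ((fun a => nu d a.rep) '' S)

/-- The linear span `⟨ν_d(Z)⟩` of the Veronese image of the subscheme with ideal `I`:
the annihilator of the degree-`d` part of `I`. -/
def schemeSpanSub (I : Ideal (PR K m)) (d : ℕ) : Submodule K (Module.Dual K (Hd K m d)) where
  carrier := {φ | ∀ f : Hd K m d, (f : PR K m) ∈ I → φ f = 0}
  add_mem' := by
    intro a b ha hb f hf
    simp [LinearMap.add_apply, ha f hf, hb f hf]
  zero_mem' := by intro f hf; simp
  smul_mem' := by
    intro c a ha f hf
    simp [LinearMap.smul_apply, ha f hf]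

/-- `P ∈ ⟨ν_d(Z)⟩`, for `Z` the subscheme with ideal `I`. -/
def inSpanI (I : Ideal (PR K m)) (d : ℕ) (P : PN K m d) : Prop := P.rep ∈ schemeSpanSub I d

/-- `P ∈ ⟨ν_d(S)⟩` for a set `S` of points of `ℙ^m`. -/
def inSpanSet (d : ℕ) (S : Set (Pm K m)) (P : PN K m d) : Prop := P.rep ∈ dualSpan d S

/-- `L` is a linear subspace of `ℙ^m`. -/
def IsLinearSub (L : Set (Pm K m)) : Prop :=
  ∃ W : Submodule K (Fin (m+1) → K), L = {a | a.submodule ≤ W}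

/-- `L` is a line of `ℙ^m`. -/
def IsLine (L : Set (Pm K m)) : Prop :=
  ∃ W : Submodule K (Fin (m+1) → K), Module.finrank K W = 2 ∧ L = {a | a.submodule ≤ W}

/-- `L` is a plane of `ℙ^m`. -/
def IsPlane (L : Set (Pm K m)) : Prop :=
  ∃ W : Submodule K (Fin (m+1) → K), Module.finrank K W = 3 ∧ L = {a | a.submodule ≤ W}

/-- `J` is the (saturated homogeneous) ideal of a conic of `ℙ^m`: a degree-2 curve contained
in a plane (possibly reducible). -/
def IsConic (J : Ideal (PR K m)) : Prop :=
  ∃ (W : Submodule K (Fin (m+1) → K)) (q : PR K m),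
    Module.finrank K W = 3 ∧ q.IsHomogeneous 2 ∧
    q ∉ idealOfSet {a : Pm K m | a.submodule ≤ W} ∧
    J = satIdeal (idealOfSet {a : Pm K m | a.submodule ≤ W} ⊔ Ideal.span {q})

/-- The algebra of polynomial functions on a `K`-vector space. -/
def polyFunctions (K V : Type) [Field K] [AddCommGroup V] [Module K V] : Subalgebra K (V → K) :=
  Algebra.adjoin K {g : V → K | ∃ φ : V →ₗ[K] K, g = ⇑φ}

/-- Zariski closure of a subset of a projective space. -/
def zClosure {V : Type} [AddCommGroup V] [Module K V] (T : Set (ℙ K V)) : Set (ℙ K V) :=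
  {P | ∀ F ∈ polyFunctions K V, (∀ Q ∈ T, ∀ c : K, F (c • Q.rep) = 0) →
    ∀ c : K, F (c • P.rep) = 0}

/-- The Veronese variety `X_{m,d} = ν_d(ℙ^m)` as a subset of `PN K m d`. -/
def XSet (K : Type) [Field K] (m d : ℕ) : Set (PN K m d) :=
  {Q | ∃ a : Pm K m, Q.submodule = Submodule.span K {nu d a.rep}}

/-- The image `ν_d(S)` of a set of points of `ℙ^m`, as a subset of `PN K m d`. -/
def nuSet (d : ℕ) (S : Set (Pm K m)) : Set (PN K m d) :=
  {Q | ∃ a ∈ S, Q.submodule = Submodule.span K {nu d a.rep}}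

/-- The rank of a point `P` of `PN` with respect to a subset `Y ⊆ PN`. -/
def rankWrt {m d : ℕ} (Y : Set (PN K m d)) (P : PN K m d) : ℕ :=
  sInf {r | ∃ S : Finset (PN K m d), ↑S ⊆ Y ∧ S.card = r ∧
    P.rep ∈ Submodule.span K (Projectivization.rep '' (S : Set (PN K m d)))}

/-- The `s`-th secant variety of `Y ⊆ PN`: the Zariski closure of the union of the spans
of `s` points of `Y`. -/
def secantWrt {m d : ℕ} (Y : Set (PN K m d)) (s : ℕ) : Set (PN K m d) :=
  zClosure {Q | ∃ S : Finset (PN K m d), ↑S ⊆ Y ∧ S.card ≤ s ∧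
    Q.rep ∈ Submodule.span K (Projectivization.rep '' (S : Set (PN K m d)))}

/-- The border rank of `P` with respect to `Y ⊆ PN`. -/
def brankWrt {m d : ℕ} (Y : Set (PN K m d)) (P : PN K m d) : ℕ :=
  sInf {s | 0 < s ∧ P ∈ secantWrt Y s}

/-- Symmetric rank. -/
def srank {m : ℕ} (d : ℕ) (P : PN K m d) : ℕ := rankWrt (XSet K m d) P

/-- Border rank. -/
def brank {m : ℕ} (d : ℕ) (P : PN K m d) : ℕ := brankWrt (XSet K m d) P

/-- Cactus rank: minimal degree of a zero-dimensional closed subscheme `E ⊂ ℙ^m` with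
`P ∈ ⟨ν_d(E)⟩`. -/
def crank {m : ℕ} (d : ℕ) (P : PN K m d) : ℕ :=
  sInf {c | ∃ Z : PSub K m, IsZeroDimI Z.I ∧ idealDeg Z.I = c ∧ inSpanI Z.I d P}

/-- `σ_{s,r}(X_{m,d})`. -/
def sigmaSet (K : Type) [Field K] (m d s r : ℕ) : Set (PN K m d) :=
  {P | brank d P = s ∧ srank d P = r}

/-- A property `Φ` holds for a general `k`-tuple of points of the linear subspace of `ℙ^m`
determined by `W`. -/
def GenerallyOn (W : Submodule K (Fin (m+1) → K)) (k : ℕ)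
    (Φ : (Fin k → Pm K m) → Prop) : Prop :=
  ∃ w : Fin 3 → W, Submodule.span K (Set.range fun j => (w j : Fin (m+1) → K)) = W ∧
    ∃ F : MvPolynomial (Fin k × Fin 3) K, F ≠ 0 ∧
      ∀ c : Fin k → Fin 3 → K,
        MvPolynomial.eval (fun p => c p.1 p.2) F ≠ 0 →
        ∀ e : Fin k → Pm K m,
          (∀ i, (e i).submodule = Submodule.span K {∑ j, c i j • (w j : Fin (m+1) → K)}) → Φ e

end

/-!
Take coordinates on the plane `U` with `O = (1 : 0 : 0)`, `O' = (0 : 0 : 1)`, `D = {X₂ = 0}` and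
`R = {X₁ = 0}`. The point `P` is the class of the functional on forms of degree `d` which sums the
top jets of length `w` at `O` along `D` and at `O'` along `R`, the evaluation at `O`, and the
evaluations at the points of `E`; a linear retraction of `ℙᵐ` onto `U` shows that neither rank nor
border rank changes when `U` is replaced by `ℙᵐ`.

*Rank.* A jet of order `w - 1` plus a suitable multiple of the evaluation at the opposite end of
the line is a sum of evaluations at points given by the `(d - w + 1)`-st roots of unity, which gives
a decomposition of the required length since the line `R` passes through `O`. Conversely,
multiplying the weights of a decomposition of `P` by equations of `D` and `R` leaves a relation in
degree `d - 2` on the points off `D ∪ R`, together with `E`. If these were few, they would lie on a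
line or a conic, and then too many points would remain on `D ∪ R`; so it suffices to treat
decompositions with exactly the points of `E` off `D ∪ R`, and to count their points on `D` and `R`.

*Border rank.* Finite differences degenerate to jets, so `P` is a limit of points of rank at most
`s`; a catalecticant minor of size `s` which does not vanish at `P` gives the reverse inequality.

*Span.* Suppose a form in the saturated ideal of `A₁` restricts to `D` with order of vanishing
`v < w` at `O`. By the Nullstellensatz and saturation the ideal then contains `y ^ v`, where `y` is
a local parameter of `D` at `O`, so `A₁` would have degree at most `v`. Hence the jets of length
`w` lie in the span of `ν_d(A₁)`, and likewise for `A₂`.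
-/

namespace Veronese

open MvPolynomial Finset

section HomogeneousPolynomials

variable {K σ : Type} [Field K]

lemma homogeneousComponent_mul_of_isHomogeneous {f g : MvPolynomial σ K} {a : ℕ}
    (hf : f.IsHomogeneous a) (n : ℕ) :
    homogeneousComponent (a + n) (f * g) = f * homogeneousComponent n g := by
  let _ : GradedAlgebra (homogeneousSubmodule σ K) := gradedAlgebra
  rw [← decomposition.decompose'_apply, ← decomposition.decompose'_apply]
  exact DirectSum.coe_decompose_mul_add_of_left_mem (homogeneousSubmodule σ K) hf

lemma homogeneousComponent_totalDegree_mul (f g : MvPolynomial σ K) :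
    homogeneousComponent (f.totalDegree + g.totalDegree) (f * g) =
      homogeneousComponent f.totalDegree f * homogeneousComponent g.totalDegree g := by
  conv_lhs =>
    enter [2, 1]
    rw [← sum_homogeneousComponent f]
  rw [sum_mul, map_sum, sum_eq_single_of_mem _ (self_mem_range_succ _)]
  · exact homogeneousComponent_mul_of_isHomogeneous (homogeneousComponent_isHomogeneous _ f) _
  · intro i hi hne
    have hlt : i < f.totalDegree := by have := mem_range.1 hi; omega
    rw [show f.totalDegree + g.totalDegree = i + (f.totalDegree - i + g.totalDegree) by omega,
      homogeneousComponent_mul_of_isHomogeneous (homogeneousComponent_isHomogeneous i f),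
      homogeneousComponent_eq_zero _ g (by omega), mul_zero]

lemma exists_isHomogeneous_eq_mul_of_dvd {f g : MvPolynomial σ K} {a n : ℕ}
    (hf : f.IsHomogeneous a) (hg : g.IsHomogeneous (a + n)) (h : f ∣ g) :
    ∃ q, q.IsHomogeneous n ∧ g = f * q := by
  obtain ⟨q, rfl⟩ := h
  exact ⟨homogeneousComponent n q, homogeneousComponent_isHomogeneous _ _, by
    rw [← homogeneousComponent_mul_of_isHomogeneous hf, homogeneousComponent_eq_self hg]⟩

lemma irreducible_of_forall_isHomogeneous_mul_ne {f : MvPolynomial σ K} {n : ℕ} (hn : n ≠ 0)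
    (hf : f.IsHomogeneous n) (hf0 : f ≠ 0)
    (h : ∀ a b, a ≠ 0 → b ≠ 0 → a + b = n → ∀ g₁ g₂ : MvPolynomial σ K,
      g₁.IsHomogeneous a → g₂.IsHomogeneous b → f ≠ g₁ * g₂) :
    Irreducible f := by
  have isUnit_of_totalDegree : ∀ g : MvPolynomial σ K, g ≠ 0 → g.totalDegree = 0 → IsUnit g := by
    intro g hg hdeg
    rw [totalDegree_eq_zero_iff_eq_C.1 hdeg] at hg ⊢
    exact (isUnit_iff_ne_zero.2 (C_ne_zero.1 hg)).map C
  refine ⟨fun hu => hn ?_, fun g₁ g₂ hmul => ?_⟩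
  · obtain ⟨c, -, rfl⟩ := isUnit_iff_eq_C_of_isReduced.1 hu
    rw [← hf.totalDegree hf0, totalDegree_C]
  have hg₁ : g₁ ≠ 0 := left_ne_zero_of_mul (hmul ▸ hf0)
  have hg₂ : g₂ ≠ 0 := right_ne_zero_of_mul (hmul ▸ hf0)
  have hdeg : g₁.totalDegree + g₂.totalDegree = n := by
    rw [← totalDegree_mul_of_isDomain hg₁ hg₂, ← hmul, hf.totalDegree hf0]
  by_contra! hcon
  refine h _ _ (fun h₁ => hcon.1 (isUnit_of_totalDegree _ hg₁ h₁))
    (fun h₂ => hcon.2 (isUnit_of_totalDegree _ hg₂ h₂)) hdeg _ _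
    (homogeneousComponent_isHomogeneous _ g₁) (homogeneousComponent_isHomogeneous _ g₂) ?_
  rw [← homogeneousComponent_totalDegree_mul, hdeg, ← hmul, homogeneousComponent_eq_self hf]

lemma eval_smul_of_isHomogeneous {f : MvPolynomial σ K} {n : ℕ} (hf : f.IsHomogeneous n)
    (c : K) (v : σ → K) : eval (c • v) f = c ^ n * eval v f := by
  rw [eval_eq, eval_eq, mul_sum]
  refine sum_congr rfl fun d hd => ?_
  simp only [Pi.smul_apply, smul_eq_mul, mul_pow, prod_mul_distrib, prod_pow_eq_pow_sum,
    ← hf.degree_eq_sum_deg_support hd]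
  ring

instance finiteDimensional_homogeneousSubmodule [Finite σ] (n : ℕ) :
    FiniteDimensional K (homogeneousSubmodule σ K n) :=
  Module.Finite.iff_fg.2 (homogeneousSubmodule_fg σ K n)

lemma finrank_homogeneousSubmodule [Fintype σ] (n : ℕ) :
    Module.finrank K (homogeneousSubmodule σ K n) =
      (Fintype.card σ + n - 1).choose n := by
  classical
  have hset : {d : σ →₀ ℕ | d.degree = n} = ((univ : Finset σ).finsuppAntidiag n : Set _) := by
    ext d
    simp [mem_finsuppAntidiag, Finsupp.degree_eq_sum]
  rw [homogeneousSubmodule_eq_finsupp_supported, hset,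
    (AddMonoidAlgebra.supportedEquivFinsupp (R := K) (S := K) _).finrank_eq,
    Module.finrank_finsupp_self]
  exact (Fintype.card_coe _).trans (card_finsuppAntidiag_nat_eq_choose n)

lemma finrank_forms_two (n : ℕ) : Module.finrank K (Hd K 2 n) = (n + 2).choose 2 := by
  rw [finrank_homogeneousSubmodule, Fintype.card_fin, show 2 + 1 + n - 1 = n + 2 by omega,
    ← Nat.choose_symm_add]

/-- Multiplication by a form `g` of degree `a`, as a map from forms of degree `n` to forms of
degree `N = a + n`; the equation is a hypothesis so that `N` can be written in any way. -/
noncomputable def mulForm {g : MvPolynomial σ K} {a n N : ℕ} (hg : g.IsHomogeneous a)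
    (hN : a + n = N) : homogeneousSubmodule σ K n →ₗ[K] homogeneousSubmodule σ K N :=
  ((LinearMap.mulLeft K g).domRestrict _).codRestrict _ fun f => hN ▸ hg.mul f.2

lemma coe_mulForm {g : MvPolynomial σ K} {a n N : ℕ} (hg : g.IsHomogeneous a)
    (hN : a + n = N) (f : homogeneousSubmodule σ K n) :
    (mulForm hg hN f : MvPolynomial σ K) = g * f :=
  rfl

end HomogeneousPolynomials

section LinearForms

variable {K σ : Type} [Field K] [Fintype σ] [DecidableEq σ]

/-- The form of degree one with the values of a linear functional. -/
noncomputable def linearForm (φ : Module.Dual K (σ → K)) : MvPolynomial σ K :=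
  ∑ i, C (φ (Pi.single i 1)) * X i

lemma isHomogeneous_linearForm (φ : Module.Dual K (σ → K)) : (linearForm φ).IsHomogeneous 1 :=
  IsHomogeneous.sum _ _ _ fun i _ => isHomogeneous_C_mul_X _ i

lemma eval_linearForm (φ : Module.Dual K (σ → K)) (v : σ → K) : eval v (linearForm φ) = φ v := by
  rw [linearForm, map_sum, φ.pi_apply_eq_sum_univ v]
  exact sum_congr rfl fun i _ => by
    rw [map_mul, eval_C, eval_X, smul_eq_mul, mul_comm, Pi.single]
    congr! 3 with j
    simp only [Function.update_apply, Pi.zero_apply, eq_comm]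

end LinearForms

section WeightedPoints

variable {K : Type} [Field K] {m : ℕ}

/-- The functional `f ↦ ∑ κ(p) f(p)` on polynomials attached to a finite weighted set of points,
each point being represented by the vector `p.rep`. -/
noncomputable def evalSum : (Pm K m →₀ K) →ₗ[K] Module.Dual K (PR K m) :=
  Finsupp.linearCombination K fun p => (aeval p.rep).toLinearMap

lemma evalSum_apply (κ : Pm K m →₀ K) (f : PR K m) :
    evalSum κ f = ∑ p ∈ κ.support, κ p * eval p.rep f := by
  simp only [evalSum, Finsupp.linearCombination_apply, Finsupp.sum, LinearMap.sum_apply,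
    LinearMap.smul_apply, smul_eq_mul, AlgHom.toLinearMap_apply, aeval_eq_eval]

/-- `κ` is a linear relation between the degree-`t` Veronese images of its points. -/
def IsRelation (t : ℕ) (κ : Pm K m →₀ K) : Prop :=
  ∀ f : PR K m, f.IsHomogeneous t → evalSum κ f = 0

/-- Rescaling the weights of `κ` by the values of `g` discards the points on `g = 0`. -/
noncomputable def residue (g : PR K m) (κ : Pm K m →₀ K) : Pm K m →₀ K :=
  (fun p : Pm K m => eval p.rep g) • κ

lemma residue_apply (g : PR K m) (κ : Pm K m →₀ K) (p : Pm K m) :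
    residue g κ p = eval p.rep g * κ p :=
  rfl

lemma residue_mul (f g : PR K m) (κ : Pm K m →₀ K) :
    residue (f * g) κ = residue f (residue g κ) := by
  ext p
  simp only [residue_apply, map_mul, mul_assoc]

lemma mem_support_residue {g : PR K m} {κ : Pm K m →₀ K} {p : Pm K m} :
    p ∈ (residue g κ).support ↔ eval p.rep g ≠ 0 ∧ p ∈ κ.support := by
  simp only [Finsupp.mem_support_iff, residue_apply, mul_ne_zero_iff]

lemma support_residue_subset (g : PR K m) (κ : Pm K m →₀ K) :
    (residue g κ).support ⊆ κ.support :=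
  fun _ hp => (mem_support_residue.1 hp).2

lemma residue_eq_zero_iff {g : PR K m} {κ : Pm K m →₀ K} :
    residue g κ = 0 ↔ ∀ p ∈ κ.support, eval p.rep g = 0 := by
  rw [← Finsupp.support_eq_empty, eq_empty_iff_forall_notMem]
  simp only [mem_support_residue, not_and', not_not]

lemma evalSum_residue (g : PR K m) (κ : Pm K m →₀ K) (f : PR K m) :
    evalSum (residue g κ) f = evalSum κ (g * f) := by
  rw [evalSum_apply, evalSum_apply, sum_subset (support_residue_subset g κ)]
  · exact sum_congr rfl fun p _ => by rw [residue_apply, map_mul]; ring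
  · intro p _ hp
    rw [Finsupp.notMem_support_iff.1 hp, zero_mul]

lemma IsRelation.residue {i t n : ℕ} {κ : Pm K m →₀ K} (h : IsRelation n κ) {g : PR K m}
    (hg : g.IsHomogeneous i) (hn : i + t = n) : IsRelation t (residue g κ) := fun f hf => by
  rw [evalSum_residue, h _ (hn ▸ hg.mul hf)]

lemma card_support_residue_add_le {f g : PR K m} {κ : Pm K m →₀ K}
    (h : residue (f * g) κ = 0) :
    #(residue f κ).support + #(residue g κ).support ≤ #κ.support := by
  classical
  rw [← card_union_of_disjoint]
  · exact card_le_card (union_subset (support_residue_subset f κ) (support_residue_subset g κ))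
  · refine disjoint_left.2 fun p hpf hpg => ?_
    have hp := residue_eq_zero_iff.1 h p (support_residue_subset f κ hpf)
    rw [map_mul] at hp
    exact mul_ne_zero (mem_support_residue.1 hpf).1 (mem_support_residue.1 hpg).1 hp

lemma card_add_card_support_residue_le {f : PR K m} {κ : Pm K m →₀ K} {T : Finset (Pm K m)}
    (hT : T ⊆ κ.support) (hf : ∀ p ∈ T, eval p.rep f = 0) :
    #T + #(residue f κ).support ≤ #κ.support := by
  classical
  rw [← card_union_of_disjoint]
  · exact card_le_card (union_subset hT (support_residue_subset f κ))
  · exact disjoint_left.2 fun p hpT hp => (mem_support_residue.1 hp).1 (hf p hpT)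

lemma exists_linearForm_eval_eq_zero_ne_zero {p : Pm K m} {v : Fin (m + 1) → K} (hv : v ≠ 0)
    (hp : Projectivization.mk K v hv ≠ p) :
    ∃ l : PR K m, l.IsHomogeneous 1 ∧ eval p.rep l = 0 ∧ eval v l ≠ 0 := by
  have hspan : v ∉ Submodule.span K {p.rep} := by
    rintro hmem
    obtain ⟨a, rfl⟩ := Submodule.mem_span_singleton.1 hmem
    refine hp (Eq.trans ?_ p.mk_rep)
    exact (Projectivization.mk_eq_mk_iff' K _ _ _ _).2 ⟨a, rfl⟩
  obtain ⟨φ, hφv, hφp⟩ := Submodule.exists_le_ker_of_notMem hspan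
  refine ⟨linearForm φ, isHomogeneous_linearForm φ, ?_, by rwa [eval_linearForm]⟩
  rw [eval_linearForm]
  exact hφp (Submodule.mem_span_singleton_self _)

lemma exists_form_separating (T : Finset (Pm K m)) {v : Fin (m + 1) → K} (hv : v ≠ 0)
    (hvT : Projectivization.mk K v hv ∉ T) {n : ℕ} (hn : #T ≤ n) :
    ∃ f : PR K m, f.IsHomogeneous n ∧ (∀ p ∈ T, eval p.rep f = 0) ∧ eval v f ≠ 0 := by
  obtain ⟨i, hi⟩ := Function.ne_iff.1 hv
  have hsep : ∀ p ∈ T, ∃ l : PR K m, l.IsHomogeneous 1 ∧ eval p.rep l = 0 ∧ eval v l ≠ 0 :=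
    fun p hp => exists_linearForm_eval_eq_zero_ne_zero hv (ne_of_mem_of_not_mem hp hvT).symm
  choose! l hl using hsep
  refine ⟨(∏ p ∈ T, l p) * X i ^ (n - #T), ?_, fun p hp => ?_, ?_⟩
  · have hdeg := (IsHomogeneous.prod T l (fun _ => 1) fun p hp => (hl p hp).1).mul
      (isHomogeneous_X_pow i (n - #T))
    rwa [sum_const, smul_eq_mul, mul_one, Nat.add_sub_cancel' hn] at hdeg
  · rw [map_mul, map_prod, prod_eq_zero hp (hl p hp).2.1, zero_mul]
  · rw [map_mul, map_prod, map_pow, eval_X]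
    exact mul_ne_zero (prod_ne_zero_iff.2 fun p hp => (hl p hp).2.2) (pow_ne_zero _ hi)

lemma exists_form_eval_eq_zero_of_ne {S : Finset (Pm K m)} {q : Pm K m} (hq : q ∈ S) {n : ℕ}
    (hn : #S ≤ n + 1) :
    ∃ f : PR K m, f.IsHomogeneous n ∧ (∀ p ∈ S, p ≠ q → eval p.rep f = 0) ∧
      eval q.rep f ≠ 0 := by
  classical
  obtain ⟨f, hf, hf0, hfq⟩ := exists_form_separating (S.erase q) q.rep_nonzero
    (by rw [q.mk_rep]; exact notMem_erase q S) (n := n) (by rw [card_erase_of_mem hq]; omega)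
  exact ⟨f, hf, fun p hp hpq => hf0 p (mem_erase.2 ⟨hpq, hp⟩), hfq⟩

lemma IsRelation.add_two_le_card_support {t : ℕ} {κ : Pm K m →₀ K} (h : IsRelation t κ)
    (hκ : κ ≠ 0) : t + 2 ≤ #κ.support := by
  obtain ⟨q, hq⟩ := Finsupp.support_nonempty_iff.2 hκ
  by_contra! hlt
  obtain ⟨f, hf, hf0, hfq⟩ := exists_form_eval_eq_zero_of_ne hq (n := t) (by omega)
  have hsum := h f hf
  rw [evalSum_apply, sum_eq_single_of_mem q hq fun p hp hpq => by rw [hf0 p hp hpq, mul_zero]]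
    at hsum
  exact mul_ne_zero (Finsupp.mem_support_iff.1 hq) hfq hsum

/-- Evaluation of forms of degree `n` at the points of `S`, represented by the vectors `p.rep`. -/
noncomputable def evalForms (n : ℕ) (S : Finset (Pm K m)) : Hd K m n →ₗ[K] (S → K) :=
  LinearMap.pi fun p => nu n p.1.rep

lemma evalForms_apply (n : ℕ) (S : Finset (Pm K m)) (f : Hd K m n) (p : S) :
    evalForms n S f p = eval p.1.rep (f : PR K m) := by
  simp only [evalForms, nu, LinearMap.pi_apply, LinearMap.comp_apply, Submodule.subtype_apply,
    AlgHom.toLinearMap_apply, aeval_eq_eval]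

lemma mem_ker_evalForms {n : ℕ} {S : Finset (Pm K m)} {f : Hd K m n} :
    f ∈ LinearMap.ker (evalForms n S) ↔ ∀ p ∈ S, eval p.rep (f : PR K m) = 0 := by
  simp only [LinearMap.mem_ker, funext_iff, evalForms_apply, Pi.zero_apply, Subtype.forall]

/-- The Hilbert function of `S`: the number of conditions imposed by `S` on forms of degree `n`. -/
noncomputable def hilbertFunction (S : Finset (Pm K m)) (n : ℕ) : ℕ :=
  Module.finrank K (LinearMap.range (evalForms n S))

lemma hilbertFunction_add_finrank_ker (S : Finset (Pm K 2)) (n : ℕ) :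
    hilbertFunction S n + Module.finrank K (LinearMap.ker (evalForms n S)) =
      (n + 2).choose 2 := by
  rw [hilbertFunction, LinearMap.finrank_range_add_finrank_ker,
    finrank_forms_two]

lemma hilbertFunction_eq_card {S : Finset (Pm K m)} {n : ℕ} (hn : #S ≤ n + 1) :
    hilbertFunction S n = #S := by
  classical
  suffices LinearMap.range (evalForms n S) = ⊤ by
    rw [hilbertFunction, this, finrank_top, Module.finrank_pi, Fintype.card_coe]
  rw [eq_top_iff, ← (Pi.basisFun K S).span_eq, Submodule.span_le]
  rintro _ ⟨⟨q, hq⟩, rfl⟩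
  obtain ⟨f, hf, hf0, hfq⟩ := exists_form_eval_eq_zero_of_ne hq hn
  refine ⟨(eval q.rep f)⁻¹ • ⟨f, hf⟩, funext fun p => ?_⟩
  rw [map_smul, Pi.smul_apply, evalForms_apply, Pi.basisFun_apply, smul_eq_mul]
  rcases eq_or_ne p ⟨q, hq⟩ with rfl | hpq
  · rw [Pi.single_eq_same, inv_mul_cancel₀ hfq]
  · rw [Pi.single_eq_of_ne hpq, hf0 p p.2 fun h => hpq (Subtype.ext h), mul_zero]

/-- Weighting by `κ`, the value vectors of forms of degrees `i` and `j` are orthogonal. -/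
lemma IsRelation.hilbertFunction_add_hilbertFunction_le {i j t : ℕ} {κ : Pm K m →₀ K}
    (h : IsRelation t κ) (ht : i + j = t) :
    hilbertFunction κ.support i + hilbertFunction κ.support j ≤ #κ.support := by
  classical
  let weight : κ.support → K := fun p => κ p
  let Φ : (κ.support → K) →ₗ[K] Module.Dual K (κ.support → K) :=
    (dotProductEquiv K κ.support).toLinearMap ∘ₗ LinearMap.mulLeft K weight
  have hΦ : Function.Injective Φ := by
    refine (dotProductEquiv K κ.support).injective.comp fun a b hab => funext fun p => ?_
    exact mul_left_cancel₀ (Finsupp.mem_support_iff.1 p.2) (congrFun hab p)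
  have hann : (LinearMap.range (evalForms j κ.support)).map Φ ≤
      (LinearMap.range (evalForms i κ.support)).dualAnnihilator := by
    rintro _ ⟨_, ⟨g, rfl⟩, rfl⟩
    rw [Submodule.mem_dualAnnihilator]
    rintro _ ⟨f, rfl⟩
    rw [← h _ (ht ▸ f.2.mul g.2), evalSum_apply, ← sum_coe_sort]
    refine sum_congr rfl fun p _ => ?_
    simp only [LinearMap.mulLeft_apply, Pi.mul_apply, evalForms_apply, map_mul, weight]
    ring
  calc _ ≤ _ := Nat.add_le_add_left ((Submodule.equivMapOfInjective Φ hΦ _).finrank_eq.le.trans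
        (Submodule.finrank_mono hann)) _
    _ = _ := by
      rw [hilbertFunction, Subspace.finrank_add_finrank_dualAnnihilator_eq, Module.finrank_pi,
          Fintype.card_coe]

end WeightedPoints

section PlanePoints

variable {K : Type} [Field K]

/-- The support of `κ` lies on a plane curve of degree `n`. -/
def LiesOnCurve (n : ℕ) (κ : Pm K 2 →₀ K) : Prop :=
  ∃ f : PR K 2, f ≠ 0 ∧ f.IsHomogeneous n ∧ residue f κ = 0

lemma LiesOnCurve.mono {i n : ℕ} {κ : Pm K 2 →₀ K} (h : LiesOnCurve i κ) (hin : i ≤ n) :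
    LiesOnCurve n κ := by
  obtain ⟨f, hf0, hf, hfκ⟩ := h
  refine ⟨X 0 ^ (n - i) * f, mul_ne_zero (pow_ne_zero _ (X_ne_zero _)) hf0, ?_, ?_⟩
  · simpa only [Nat.sub_add_cancel hin] using (isHomogeneous_X_pow (R := K) 0 (n - i)).mul hf
  · rw [residue_mul, hfκ]
    exact smul_zero _

lemma residue_ne_zero_of_not_liesOnCurve {n : ℕ} {κ : Pm K 2 →₀ K} (h : ¬ LiesOnCurve n κ)
    {f : PR K 2} (hf0 : f ≠ 0) (hf : f.IsHomogeneous n) : residue f κ ≠ 0 :=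
  fun hfκ => h ⟨f, hf0, hf, hfκ⟩

lemma exists_curve_through (n : ℕ) {T : Finset (Pm K 2)} (hT : #T < (n + 2).choose 2) :
    ∃ f : PR K 2, f ≠ 0 ∧ f.IsHomogeneous n ∧ ∀ p ∈ T, eval p.rep f = 0 := by
  have hker : LinearMap.ker (evalForms n T) ≠ ⊥ := LinearMap.ker_ne_bot_of_finrank_lt (by
    rwa [finrank_forms_two, Module.finrank_pi, Fintype.card_coe])
  obtain ⟨f, hf, hf0⟩ := Submodule.exists_mem_ne_zero_of_ne_bot hker
  exact ⟨f, fun h => hf0 (Subtype.ext h), f.2, mem_ker_evalForms.1 hf⟩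

/-- A form through two of the points leaves a relation of lower degree on the other ones; if these
lie on a second line, the two lines have disjoint complements in the support. -/
lemma IsRelation.liesOnCurve_one {t : ℕ} {κ : Pm K 2 →₀ K} (h : IsRelation t κ)
    (hcard : #κ.support ≤ 2 * t + 1) : LiesOnCurve 1 κ := by
  induction t generalizing κ with
  | zero =>
    obtain ⟨l, hl0, hl, hlκ⟩ := exists_curve_through 1 (T := κ.support)
      (show _ < 3 by omega)
    exact ⟨l, hl0, hl, residue_eq_zero_iff.2 hlκ⟩
  | succ t ih =>
    by_contra hline
    have hnz {l : PR K 2} := residue_ne_zero_of_not_liesOnCurve hline (f := l)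
    have hcount {l : PR K 2} (hl0 : l ≠ 0) (hl : l.IsHomogeneous 1) :=
      (h.residue hl (add_comm 1 t)).add_two_le_card_support (hnz hl0 hl)
    obtain ⟨T, hTκ, hT⟩ := exists_subset_card_eq (s := κ.support) (n := 2)
      ((hcount (X_ne_zero 0) (isHomogeneous_X K 0)).trans
        (card_le_card (support_residue_subset _ _)) |>.trans' (by omega))
    obtain ⟨l, hl0, hl, hlT⟩ := exists_curve_through 1 (T := T)
      (show _ < 3 by omega)
    have hT_add := card_add_card_support_residue_le hTκ hlT
    obtain ⟨l', hl0', hl', hll'⟩ := ih (h.residue hl (add_comm 1 t)) (by omega)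
    have hdisj := card_support_residue_add_le (residue_mul l' l κ ▸ hll')
    have hl_card := hcount hl0 hl
    have hl'_card := hcount hl0' hl'
    omega

lemma choose_add_five_two (n : ℕ) : (n + 5).choose 2 = (n + 2).choose 2 + 3 * n + 9 := by
  simp only [Nat.choose_succ_succ', Nat.choose_zero_right, Nat.choose_one_right, Nat.reduceAdd]
  ring

/-- The only syzygies of `f` and `g` are the Koszul ones. -/
lemma finrank_range_coprod_mulForm_le {a b n : ℕ} {f g : PR K 2} (hf : f.IsHomogeneous a)
    (hg : g.IsHomogeneous b) (hprime : Prime f) (hfg : ¬ f ∣ g) :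
    (n + b + 2).choose 2 + (n + a + 2).choose 2 ≤ (n + 2).choose 2 +
      Module.finrank K (LinearMap.range
        ((mulForm hf (n := n + b) (N := n + b + a) (by ring)).coprod
          (mulForm hg (n := n + a) (by ring)))) := by
  set Ψ := (mulForm hf (n := n + b) (N := n + b + a) (by ring)).coprod
    (mulForm hg (n := n + a) (by ring))
  let Θ : Hd K 2 n →ₗ[K] Hd K 2 (n + b) × Hd K 2 (n + a) :=
    (-(mulForm hg (by ring))).prod (mulForm hf (by ring))
  have hker : LinearMap.ker Ψ ≤ LinearMap.range Θ := by
    rintro ⟨u, v⟩ huv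
    have hsum : f * (u : PR K 2) + g * v = 0 := congrArg Subtype.val huv
    have hdvd : f ∣ (v : PR K 2) :=
      (hprime.dvd_or_dvd ⟨-u.1, by linear_combination hsum⟩).resolve_left hfg
    obtain ⟨q, hq, hvq⟩ := exists_isHomogeneous_eq_mul_of_dvd hf (n := n)
      (by simpa only [add_comm, mem_homogeneousSubmodule] using v.2) hdvd
    have huq : -(g * q) = (u : PR K 2) := mul_left_cancel₀ hprime.ne_zero (by
      rw [hvq] at hsum
      linear_combination -hsum)
    exact ⟨⟨q, hq⟩, Prod.ext (Subtype.ext huq) (Subtype.ext hvq.symm)⟩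
  have hker_le := (Submodule.finrank_mono hker).trans (LinearMap.finrank_range_le Θ)
  have hrank := LinearMap.finrank_range_add_finrank_ker Ψ
  rw [Module.finrank_prod] at hrank
  simp only [finrank_forms_two] at hker_le hrank
  omega

lemma card_le_three_mul_of_prime_cubic {S : Finset (Pm K 2)} {e : ℕ} {C G : PR K 2}
    (hC : C.IsHomogeneous 3) (hG : G.IsHomogeneous e) (hprime : Prime C) (hCG : ¬ C ∣ G)
    (hCS : ∀ p ∈ S, eval p.rep C = 0) (hGS : ∀ p ∈ S, eval p.rep G = 0) : #S ≤ 3 * e := by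
  have hrank := hilbertFunction_add_finrank_ker S (#S + e + 3)
  rw [hilbertFunction_eq_card (by omega)] at hrank
  have hkoszul := finrank_range_coprod_mulForm_le (n := #S) hC hG hprime hCG
  have hle : LinearMap.range ((mulForm hC (n := #S + e) (N := #S + e + 3) (by ring)).coprod
      (mulForm hG (n := #S + 3) (by ring))) ≤ LinearMap.ker (evalForms (#S + e + 3) S) := by
    rintro _ ⟨⟨u, v⟩, rfl⟩
    refine mem_ker_evalForms.2 fun p hp => ?_
    rw [LinearMap.coprod_apply, Submodule.coe_add, coe_mulForm, coe_mulForm, map_add, map_mul,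
      map_mul, hCS p hp, hGS p hp, zero_mul, zero_mul, add_zero]
  have hbound := (Nat.add_le_add_left (Submodule.finrank_mono hle) _).trans_eq hrank
  have hchoose := choose_add_five_two (#S + e)
  have hchoose' := choose_add_five_two #S
  rw [show #S + e + 3 + 2 = #S + e + 5 by ring] at hbound
  rw [show #S + 3 + 2 = #S + 5 by ring] at hkoszul
  omega

lemma exists_form_not_dvd_of_hilbertFunction_lt {S : Finset (Pm K 2)} {e : ℕ} {C : PR K 2}
    (hC : C.IsHomogeneous 3) (h : hilbertFunction S (3 + e) < 3 * (3 + e)) :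
    ∃ G : PR K 2, G.IsHomogeneous (3 + e) ∧ ¬ C ∣ G ∧ ∀ p ∈ S, eval p.rep G = 0 := by
  by_contra! hcon
  have hker : LinearMap.ker (evalForms (3 + e) S) ≤ LinearMap.range (mulForm hC rfl) := by
    intro f hf
    have hdvd : C ∣ (f : PR K 2) := by
      by_contra hdvd
      obtain ⟨p, hp, hne⟩ := hcon f f.2 hdvd
      exact hne (mem_ker_evalForms.1 hf p hp)
    obtain ⟨q, hq, hfq⟩ := exists_isHomogeneous_eq_mul_of_dvd hC f.2 hdvd
    exact ⟨⟨q, hq⟩, Subtype.ext hfq.symm⟩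
  have hle := (Submodule.finrank_mono hker).trans (LinearMap.finrank_range_le _)
  have hrank := hilbertFunction_add_finrank_ker S (3 + e)
  have hchoose := choose_add_five_two e
  rw [finrank_forms_two] at hle
  rw [show 3 + e + 2 = e + 5 by ring] at hrank
  omega

lemma three_mul_le_hilbertFunction {S : Finset (Pm K 2)} {e : ℕ} (he : 3 ≤ e) (hS : 3 * e < #S)
    {C : PR K 2} (hC : C.IsHomogeneous 3) (hprime : Prime C) (hCS : ∀ p ∈ S, eval p.rep C = 0) :
    3 * e ≤ hilbertFunction S e := by
  by_contra! hlt
  obtain ⟨e, rfl⟩ := Nat.exists_eq_add_of_le he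
  obtain ⟨G, hG, hCG, hGS⟩ := exists_form_not_dvd_of_hilbertFunction_lt hC hlt
  exact hS.not_ge (card_le_three_mul_of_prime_cubic hC hG hprime hCG hCS hGS)

lemma hilbertFunction_of_not_liesOnCurve {n i : ℕ} {κ : Pm K 2 →₀ K} (h : ¬ LiesOnCurve n κ)
    (hi : i ≤ n) : hilbertFunction κ.support i = (i + 2).choose 2 := by
  suffices LinearMap.ker (evalForms i κ.support) = ⊥ by
    rw [← hilbertFunction_add_finrank_ker κ.support, this, finrank_bot, add_zero]
  refine (Submodule.eq_bot_iff _).2 fun f hf => ?_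
  by_contra hf0
  exact h (LiesOnCurve.mono ⟨f, fun h0 => hf0 (Subtype.ext h0), f.2,
    residue_eq_zero_iff.2 (mem_ker_evalForms.1 hf)⟩ hi)

lemma prime_of_cubic {κ : Pm K 2 →₀ K} (hκ : 8 ≤ #κ.support) {C : PR K 2} (hC0 : C ≠ 0)
    (hC : C.IsHomogeneous 3) (hCκ : residue C κ = 0)
    (hline : ∀ l : PR K 2, l ≠ 0 → l.IsHomogeneous 1 →
      #κ.support ≤ #(residue l κ).support + 2)
    (hconic : ∀ Q : PR K 2, Q ≠ 0 → Q.IsHomogeneous 2 →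
      #κ.support ≤ #(residue Q κ).support + 5) : Prime C := by
  refine (irreducible_of_forall_isHomogeneous_mul_ne three_ne_zero hC hC0 ?_).prime
  rintro a b ha hb hab g₁ g₂ hg₁ hg₂ rfl
  have hcard := card_support_residue_add_le hCκ
  have hg₁0 := left_ne_zero_of_mul hC0
  have hg₂0 := right_ne_zero_of_mul hC0
  obtain ⟨rfl, rfl⟩ | ⟨rfl, rfl⟩ : a = 1 ∧ b = 2 ∨ a = 2 ∧ b = 1 := by omega
  · have hl := hline g₁ hg₁0 hg₁
    have hQ := hconic g₂ hg₂0 hg₂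
    omega
  · have hQ := hconic g₁ hg₁0 hg₁
    have hl := hline g₂ hg₂0 hg₂
    omega

/-- The statement proved by strong induction on the degree in `IsRelation.liesOnCurve_two`: the
support of a relation of degree less than `t` with few points lies on a conic. -/
def ConicBelow (K : Type) [Field K] (t : ℕ) : Prop :=
  ∀ i < t, ∀ κ : Pm K 2 →₀ K, IsRelation i κ → #κ.support + 1 ≤ 3 * i → LiesOnCurve 2 κ

section InductionStep

variable {t : ℕ} {κ : Pm K 2 →₀ K}

lemma two_mul_add_two_le_card_of_not_liesOnCurve_one (h : IsRelation t κ)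
    (hno : ¬ LiesOnCurve 1 κ) : 2 * t + 2 ≤ #κ.support := by
  by_contra! hlt
  exact hno (h.liesOnCurve_one (by omega))

lemma not_liesOnCurve_residue {a b n : ℕ} (hno : ¬ LiesOnCurve n κ) (hab : a + b = n) {f : PR K 2}
    (hf0 : f ≠ 0) (hf : f.IsHomogeneous b) : ¬ LiesOnCurve a (residue f κ) := by
  rintro ⟨g, hg0, hg, hgκ⟩
  exact hno ⟨g * f, mul_ne_zero hg0 hf0, hab ▸ hg.mul hf, by rw [residue_mul, hgκ]⟩

lemma card_le_card_residue_line_add_two (ht : 5 ≤ t) (h : IsRelation t κ)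
    (hcard : #κ.support + 1 ≤ 3 * t) (hno : ¬ LiesOnCurve 2 κ) (ih : ConicBelow K t)
    {l : PR K 2} (hl0 : l ≠ 0) (hl : l.IsHomogeneous 1) :
    #κ.support ≤ #(residue l κ).support + 2 := by
  by_contra! hlt
  have hrel : IsRelation (t - 1) (residue l κ) := h.residue hl (by omega)
  obtain ⟨Q, hQ0, hQ, hQκ⟩ := ih (t - 1) (by omega) _ hrel (by omega)
  have hQ_card := (h.residue hQ (show 2 + (t - 2) = t by omega)).add_two_le_card_support
    (residue_ne_zero_of_not_liesOnCurve hno hQ0 hQ)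
  have hl_card := two_mul_add_two_le_card_of_not_liesOnCurve_one hrel
    (not_liesOnCurve_residue hno rfl hl0 hl)
  have hdisj := card_support_residue_add_le (residue_mul Q l κ ▸ hQκ)
  omega

lemma two_mul_le_card_residue_conic_add_two (ht : 5 ≤ t) (h : IsRelation t κ)
    (hno : ¬ LiesOnCurve 2 κ)
    (hline : ∀ l : PR K 2, l ≠ 0 → l.IsHomogeneous 1 →
      #κ.support ≤ #(residue l κ).support + 2)
    {Q : PR K 2} (hQ0 : Q ≠ 0) (hQ : Q.IsHomogeneous 2) :
    2 * t ≤ #(residue Q κ).support + 2 := by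
  by_contra! hlt
  have hrel : IsRelation (t - 2) (residue Q κ) := h.residue hQ (by omega)
  have hcount := hrel.add_two_le_card_support (residue_ne_zero_of_not_liesOnCurve hno hQ0 hQ)
  obtain ⟨l, hl0, hl, hlκ⟩ := hrel.liesOnCurve_one (by omega)
  have hdisj := card_support_residue_add_le (residue_mul l Q κ ▸ hlκ)
  have hl_card := hline l hl0 hl
  omega

lemma card_le_card_residue_conic_add_five (ht : 5 ≤ t) (h : IsRelation t κ)
    (hcard : #κ.support + 1 ≤ 3 * t) (hno : ¬ LiesOnCurve 2 κ) (ih : ConicBelow K t)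
    (hline : ∀ l : PR K 2, l ≠ 0 → l.IsHomogeneous 1 →
      #κ.support ≤ #(residue l κ).support + 2)
    {Q : PR K 2} (hQ0 : Q ≠ 0) (hQ : Q.IsHomogeneous 2) :
    #κ.support ≤ #(residue Q κ).support + 5 := by
  by_contra! hlt
  obtain ⟨Q', hQ'0, hQ', hQ'κ⟩ :=
    ih (t - 2) (by omega) _ (h.residue hQ (by omega)) (by omega)
  have hdisj := card_support_residue_add_le (residue_mul Q' Q κ ▸ hQ'κ)
  have hQ_card := two_mul_le_card_residue_conic_add_two ht h hno hline hQ0 hQ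
  have hQ'_card := two_mul_le_card_residue_conic_add_two ht h hno hline hQ'0 hQ'
  omega

/-- A cubic through nine points of the support contains the whole support. -/
lemma liesOnCurve_three (ht : 5 ≤ t) (h : IsRelation t κ) (hcard : #κ.support + 1 ≤ 3 * t)
    (ih : ConicBelow K t) (hbig : 9 ≤ #κ.support)
    (hline : ∀ l : PR K 2, l ≠ 0 → l.IsHomogeneous 1 →
      #κ.support ≤ #(residue l κ).support + 2)
    (hconic : ∀ Q : PR K 2, Q ≠ 0 → Q.IsHomogeneous 2 →
      #κ.support ≤ #(residue Q κ).support + 5) : LiesOnCurve 3 κ := by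
  obtain ⟨T, hTκ, hT⟩ := exists_subset_card_eq hbig
  obtain ⟨C, hC0, hC, hCT⟩ := exists_curve_through 3 (T := T) (by
    rw [hT]
    decide)
  refine ⟨C, hC0, hC, ?_⟩
  by_contra hCκ
  have hT_add := card_add_card_support_residue_le hTκ hCT
  have hrel : IsRelation (t - 3) (residue C κ) := h.residue hC (by omega)
  have hcount := hrel.add_two_le_card_support hCκ
  obtain ⟨Q, hQ0, hQ, hQκ⟩ := ih (t - 3) (by omega) _ hrel (by omega)
  have hQ_disj := card_support_residue_add_le (residue_mul Q C κ ▸ hQκ)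
  have hQ_card := hconic Q hQ0 hQ
  obtain ⟨l, hl0, hl, hlκ⟩ := hrel.liesOnCurve_one (by omega)
  have hl_disj := card_support_residue_add_le (residue_mul l C κ ▸ hlκ)
  have hl_card := hline l hl0 hl
  omega

lemma three_mul_le_card_of_not_liesOnCurve_two (ht : 5 ≤ t) (h : IsRelation t κ)
    (hno : ¬ LiesOnCurve 2 κ) (ih : ConicBelow K t) : 3 * t ≤ #κ.support := by
  by_contra! hcard
  have hline {l : PR K 2} := card_le_card_residue_line_add_two ht h hcard hno ih (l := l)
  have hconic {Q : PR K 2} :=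
    card_le_card_residue_conic_add_five ht h hcard hno ih (fun _ => hline) (Q := Q)
  have hbig := two_mul_add_two_le_card_of_not_liesOnCurve_one h
    fun hl => hno (hl.mono one_le_two)
  obtain ⟨C, hC0, hC, hCκ⟩ :=
    liesOnCurve_three ht h hcard ih (by omega) (fun _ => hline) (fun _ => hconic)
  have hprime := prime_of_cubic (by omega) hC0 hC hCκ (fun _ => hline) (fun _ => hconic)
  have hhilb {e : ℕ} (he : 3 ≤ e) (het : 2 * e ≤ t + 1) :=
    three_mul_le_hilbertFunction he (show 3 * e < #κ.support by omega) hC hprime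
      (residue_eq_zero_iff.1 hCκ)
  have htwo : 6 ≤ hilbertFunction κ.support 2 :=
    (hilbertFunction_of_not_liesOnCurve hno le_rfl).ge
  have horth := h.hilbertFunction_add_hilbertFunction_le (show t / 2 + (t - t / 2) = t by omega)
  have hright := hhilb (e := t - t / 2) (by omega) (by omega)
  have hleft : 3 * (t / 2) ≤ hilbertFunction κ.support (t / 2) := by
    rcases (show 2 ≤ t / 2 by omega).eq_or_lt with h2 | h2
    · rwa [← h2]
    · exact hhilb h2 (by omega)
  omega

end InductionStep

lemma three_mul_le_card_of_le_four {t : ℕ} {κ : Pm K 2 →₀ K} (ht : t ≤ 4) (h : IsRelation t κ)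
    (hno : ¬ LiesOnCurve 2 κ) : 3 * t ≤ #κ.support := by
  have hhilb (i : ℕ) (hi : i ≤ 2) := hilbertFunction_of_not_liesOnCurve hno hi
  have hrank := h.hilbertFunction_add_hilbertFunction_le (show t / 2 + (t - t / 2) = t by omega)
  rw [hhilb _ (by omega), hhilb _ (by omega)] at hrank
  interval_cases t <;> simp only [Nat.choose] at hrank <;> omega

lemma IsRelation.liesOnCurve_two {t : ℕ} {κ : Pm K 2 →₀ K} (h : IsRelation t κ)
    (hcard : #κ.support + 1 ≤ 3 * t) : LiesOnCurve 2 κ := by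
  induction t using Nat.strong_induction_on generalizing κ with
  | _ t ih =>
  by_contra hno
  refine absurd hcard (Nat.not_le_of_lt (Nat.lt_succ_of_le ?_))
  rcases le_or_gt t 4 with ht | ht
  · exact three_mul_le_card_of_le_four ht h hno
  · exact three_mul_le_card_of_not_liesOnCurve_two ht h hno fun i hi _ hκ hc => ih i hi hκ hc

end PlanePoints

section LinearSubstitution

variable {K σ τ : Type} [Field K] [Fintype σ] [DecidableEq σ]

/-- Composition of polynomial functions with the linear map `L`. -/
noncomputable def pullback (L : (σ → K) →ₗ[K] (τ → K)) : MvPolynomial τ K →ₐ[K] MvPolynomial σ K :=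
  aeval fun i => linearForm (LinearMap.proj i ∘ₗ L)

lemma eval_pullback (L : (σ → K) →ₗ[K] (τ → K)) (f : MvPolynomial τ K) (v : σ → K) :
    eval v (pullback L f) = eval (L v) f := by
  suffices (aeval v).comp (pullback L) = (aeval (L v) : MvPolynomial τ K →ₐ[K] K) by
    simpa only [AlgHom.comp_apply, aeval_eq_eval] using DFunLike.congr_fun this f
  refine algHom_ext fun i => ?_
  rw [AlgHom.comp_apply, pullback, aeval_X, aeval_X, aeval_eq_eval, eval_linearForm,
    LinearMap.comp_apply, LinearMap.proj_apply]

lemma isHomogeneous_pullback (L : (σ → K) →ₗ[K] (τ → K)) {f : MvPolynomial τ K} {n : ℕ}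
    (hf : f.IsHomogeneous n) : (pullback L f).IsHomogeneous n := by
  simpa only [pullback, one_mul] using hf.aeval _ fun i => isHomogeneous_linearForm _

end LinearSubstitution

section RestrictionToLine

variable {K σ τ : Type} [Field K]

/-- Restriction of polynomials to the parametrized line `t ↦ p + t q`. -/
noncomputable def restrictLine (p q : σ → K) : MvPolynomial σ K →ₐ[K] Polynomial K :=
  aeval fun i => Polynomial.C (p i) + Polynomial.C (q i) * Polynomial.X

lemma restrictLine_X (p q : σ → K) (i : σ) :
    restrictLine p q (X i) = Polynomial.C (p i) + Polynomial.C (q i) * Polynomial.X :=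
  aeval_X _ _

lemma eval_restrictLine (p q : σ → K) (f : MvPolynomial σ K) (t : K) :
    (restrictLine p q f).eval t = eval (p + t • q) f := by
  suffices (Polynomial.aeval t).comp (restrictLine p q) =
      (aeval (p + t • q) : MvPolynomial σ K →ₐ[K] K) by
    simpa only [AlgHom.comp_apply, aeval_eq_eval, Polynomial.coe_aeval_eq_eval]
      using DFunLike.congr_fun this f
  refine algHom_ext fun i => ?_
  simp only [restrictLine, AlgHom.comp_apply, aeval_X, map_add, map_mul, Polynomial.aeval_C,
    Polynomial.aeval_X, Algebra.algebraMap_self_apply, Pi.add_apply, Pi.smul_apply, smul_eq_mul,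
    mul_comm t]

lemma coeff_zero_restrictLine (p q : σ → K) (f : MvPolynomial σ K) :
    (restrictLine p q f).coeff 0 = eval p f := by
  rw [Polynomial.coeff_zero_eq_eval_zero, eval_restrictLine, zero_smul, add_zero]

lemma restrictLine_linearForm [Fintype σ] [DecidableEq σ] (p q : σ → K)
    (φ : Module.Dual K (σ → K)) :
    restrictLine p q (linearForm φ) =
      Polynomial.C (φ p) + Polynomial.C (φ q) * Polynomial.X := by
  rw [← eval_linearForm φ p, ← eval_linearForm φ q]
  simp only [linearForm, restrictLine, map_sum, map_mul, algHom_C, Polynomial.algebraMap_eq,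
    aeval_X, eval_C, eval_X, sum_mul, ← sum_add_distrib]
  exact sum_congr rfl fun i _ => by ring

lemma restrictLine_pullback [Fintype σ] [DecidableEq σ] (L : (σ → K) →ₗ[K] (τ → K)) (p q : σ → K)
    (f : MvPolynomial τ K) :
    restrictLine p q (pullback L f) = restrictLine (L p) (L q) f := by
  suffices (restrictLine p q).comp (pullback L) = restrictLine (L p) (L q) from
    DFunLike.congr_fun this f
  refine algHom_ext fun i => ?_
  rw [AlgHom.comp_apply, pullback, aeval_X, restrictLine_linearForm, restrictLine, aeval_X]
  rfl

lemma natDegree_restrictLine_le (p q : σ → K) {f : MvPolynomial σ K} {n : ℕ}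
    (hf : f.IsHomogeneous n) : (restrictLine p q f).natDegree ≤ n := by
  rw [restrictLine, aeval_def, eval₂_eq]
  refine Polynomial.natDegree_sum_le_of_forall_le _ _ fun s hs => ?_
  rw [hf.degree_eq_sum_deg_support hs]
  refine (Polynomial.natDegree_C_mul_le _ _).trans ((Polynomial.natDegree_prod_le _ _).trans ?_)
  refine sum_le_sum fun i _ => Polynomial.natDegree_pow_le_of_le _ ?_ |>.trans (mul_one _).le
  compute_degree

lemma coeff_prod_pow_of_natDegree_le_one {ι : Type} (s : Finset ι) (e : ι → ℕ)
    {g : ι → Polynomial K} (hg : ∀ i, (g i).natDegree ≤ 1) :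
    (∏ i ∈ s, g i ^ e i).coeff (∑ i ∈ s, e i) = ∏ i ∈ s, (g i).coeff 1 ^ e i := by
  classical
  have hpow (i : ι) : (g i ^ e i).natDegree ≤ e i :=
    (Polynomial.natDegree_pow_le_of_le _ (hg i)).trans (mul_one _).le
  induction s using Finset.induction_on with
  | empty => simp only [prod_empty, sum_empty, Polynomial.coeff_one_zero]
  | insert i s hi ih =>
    have hcoeff := Polynomial.coeff_pow_of_natDegree_le (m := e i) (hg i)
    rw [mul_one] at hcoeff
    rw [prod_insert hi, sum_insert hi, prod_insert hi, Polynomial.coeff_mul_add_eq_of_natDegree_le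
      (hpow i) ((Polynomial.natDegree_prod_le _ _).trans (sum_le_sum fun j _ => hpow j)), ih,
      hcoeff]

lemma coeff_restrictLine_degree (p q : σ → K) {f : MvPolynomial σ K} {n : ℕ}
    (hf : f.IsHomogeneous n) : (restrictLine p q f).coeff n = eval q f := by
  rw [restrictLine, aeval_def, eval₂_eq, Polynomial.finsetSum_coeff, eval_eq]
  refine sum_congr rfl fun s hs => ?_
  rw [Polynomial.algebraMap_eq, Polynomial.coeff_C_mul, hf.degree_eq_sum_deg_support hs,
    coeff_prod_pow_of_natDegree_le_one _ _ fun i => by compute_degree]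
  simp only [Polynomial.coeff_add, Polynomial.coeff_C_succ, Polynomial.coeff_C_mul,
    Polynomial.coeff_X_one, mul_one, zero_add]

lemma eval_add_eq_zero_of_restrictLine_eq_zero [Infinite K] {p q : σ → K} {f : MvPolynomial σ K}
    {n : ℕ} (hf : f.IsHomogeneous n) (h : restrictLine p q f = 0) (a b : K) :
    eval (a • p + b • q) f = 0 := by
  rcases eq_or_ne a 0 with rfl | ha
  · rw [zero_smul, zero_add, eval_smul_of_isHomogeneous hf, ← coeff_restrictLine_degree p q hf, h,
      Polynomial.coeff_zero, mul_zero]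
  · rw [show a • p + b • q = a • (p + (a⁻¹ * b) • q) by
      rw [smul_add, smul_smul, mul_inv_cancel_left₀ ha], eval_smul_of_isHomogeneous hf,
      ← eval_restrictLine, h, Polynomial.eval_zero, mul_zero]

lemma X_dvd_of_forall_eval_eq_zero [Infinite K] {k : σ} {f : MvPolynomial σ K}
    (h : ∀ v : σ → K, v k = 0 → eval v f = 0) : X k ∣ f := by
  classical
  let kill : MvPolynomial σ K →ₐ[K] MvPolynomial σ K := aeval (Function.update X k 0)
  let quot := Ideal.Quotient.mkₐ K (Ideal.span {(X k : MvPolynomial σ K)})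
  have hkill : kill f = 0 := MvPolynomial.funext fun v => by
    suffices (aeval v).comp kill = (aeval (Function.update v k 0) : MvPolynomial σ K →ₐ[K] K) by
      rw [map_zero, ← h (Function.update v k 0) (Function.update_self ..)]
      simpa only [AlgHom.comp_apply, aeval_eq_eval] using DFunLike.congr_fun this f
    refine algHom_ext fun i => ?_
    rcases eq_or_ne i k with rfl | hik <;> simp [kill, *]
  have hquot : quot.comp kill = quot := algHom_ext fun i => by
    rcases eq_or_ne i k with rfl | hik
    · rw [AlgHom.comp_apply, aeval_X, Function.update_self, map_zero]
      exact (Ideal.Quotient.eq_zero_iff_mem.2 (Ideal.mem_span_singleton_self _)).symm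
    · simp [kill, hik]
  rw [← Ideal.mem_span_singleton, ← Ideal.Quotient.eq_zero_iff_mem]
  change quot f = 0
  rw [← hquot, AlgHom.comp_apply, hkill, map_zero]

lemma X_dvd_of_restrictLine_eq_zero [Infinite K] [DecidableEq σ] {i j k : σ} (hij : i ≠ j)
    (hijk : ∀ l, l = i ∨ l = j ∨ l = k) {f : MvPolynomial σ K} {n : ℕ} (hf : f.IsHomogeneous n)
    (h : restrictLine (Pi.single i 1) (Pi.single j 1) f = 0) : X k ∣ f := by
  refine X_dvd_of_forall_eval_eq_zero fun v hv => ?_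
  rw [← eval_add_eq_zero_of_restrictLine_eq_zero hf h (v i) (v j)]
  congr 2
  funext l
  rcases hijk l with rfl | rfl | rfl
  · simp [hij]
  · simp [hij]
  · simp only [Pi.add_apply, Pi.smul_apply, Pi.single_apply, hv]
    split_ifs <;> simp_all

lemma linearIndependent_pair_of_ne {ι V : Type} [AddCommGroup V] [Module K V] {u : ι → V}
    (hu : LinearIndependent K u) {i j : ι} (hij : i ≠ j) : LinearIndependent K ![u i, u j] := by
  have hcomp : u ∘ ![i, j] = ![u i, u j] := funext fun k => by fin_cases k <;> rfl
  refine hcomp ▸ hu.comp ![i, j] fun k l hkl => ?_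
  fin_cases k <;> fin_cases l <;> simp_all

lemma exists_restrictLine_eq [Finite σ] {p q : σ → K} (hpq : LinearIndependent K ![p, q])
    {u : Polynomial K} {n : ℕ} (hu : u.natDegree ≤ n) :
    ∃ f : MvPolynomial σ K, f.IsHomogeneous n ∧ restrictLine p q f = u := by
  classical
  have := Fintype.ofFinite σ
  obtain ⟨L, hL⟩ := LinearMap.exists_leftInverse_of_injective
    (Fintype.linearCombination K ![p, q]) (LinearMap.ker_eq_bot.2
      (linearIndependent_iff_injective_fintypeLinearCombination.1 hpq))
  have hLp : L p = ![1, 0] := by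
    simpa [Fintype.linearCombination_apply] using LinearMap.congr_fun hL ![1, 0]
  have hLq : L q = ![0, 1] := by
    simpa [Fintype.linearCombination_apply] using LinearMap.congr_fun hL ![0, 1]
  let x := linearForm (LinearMap.proj 0 ∘ₗ L)
  let y := linearForm (LinearMap.proj 1 ∘ₗ L)
  have hx : restrictLine p q x = 1 := by simp [x, restrictLine_linearForm, hLp, hLq]
  have hy : restrictLine p q y = Polynomial.X := by simp [y, restrictLine_linearForm, hLp, hLq]
  refine ⟨∑ i ∈ range (n + 1), C (u.coeff i) * (y ^ i * x ^ (n - i)),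
    IsHomogeneous.sum _ _ _ fun i hi => IsHomogeneous.C_mul ?_ _, ?_⟩
  · have hdeg := ((isHomogeneous_linearForm (LinearMap.proj 1 ∘ₗ L)).pow i).mul
      ((isHomogeneous_linearForm (LinearMap.proj 0 ∘ₗ L)).pow (n - i))
    rwa [one_mul, one_mul, Nat.add_sub_cancel' (Nat.lt_succ_iff.1 (mem_range.1 hi))] at hdeg
  · conv_rhs => rw [u.as_sum_range_C_mul_X_pow' (Nat.lt_succ_of_le hu)]
    rw [map_sum]
    refine sum_congr rfl fun i _ => ?_
    rw [map_mul, map_mul, map_pow, map_pow, hx, hy, one_pow, mul_one, algHom_C,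
      Polynomial.algebraMap_eq]

lemma exists_dvd_coeff_restrictLine_eq [Finite σ] {p q : σ → K}
    (hpq : LinearIndependent K ![p, q]) {F : MvPolynomial σ K} {e n w : ℕ} (hF : F.IsHomogeneous e)
    (hFp : eval p F ≠ 0) (hw : w ≤ n + 1) (c : ℕ → K) :
    ∃ f : MvPolynomial σ K, f.IsHomogeneous (e + n) ∧ F ∣ f ∧
      ∀ i < w, (restrictLine p q f).coeff i = c i := by
  let Φ : PowerSeries K := restrictLine p q F
  have hΦ : PowerSeries.constantCoeff Φ ≠ 0 := by
    simpa only [Φ, Polynomial.constantCoeff_coe, coeff_zero_restrictLine] using hFp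
  obtain ⟨g, hg, hgs⟩ := exists_restrictLine_eq hpq
    (Nat.lt_succ_iff.1 (PowerSeries.natDegree_trunc_lt (PowerSeries.mk c * Φ⁻¹) n))
  refine ⟨F * g, hF.mul hg, dvd_mul_right F g, fun i hi => ?_⟩
  have hi' : i < n + 1 := hi.trans_le hw
  rw [map_mul, hgs, ← Polynomial.coeff_coe, Polynomial.coe_mul,
    PowerSeries.coeff_mul_eq_coeff_trunc_mul_trunc _ _ hi', PowerSeries.trunc_trunc,
    ← PowerSeries.coeff_mul_eq_coeff_trunc_mul_trunc _ _ hi', mul_left_comm,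
    PowerSeries.mul_inv_cancel _ hΦ, mul_one, PowerSeries.coeff_mk]

end RestrictionToLine

section VeroneseSums

variable {K : Type} [Field K] {m d : ℕ}

lemma nu_apply (v : Fin (m + 1) → K) (f : Hd K m d) : nu d v f = eval v (f : PR K m) := by
  rw [nu, LinearMap.comp_apply, Submodule.subtype_apply, AlgHom.toLinearMap_apply, aeval_eq_eval]

lemma nu_smul (c : K) (v : Fin (m + 1) → K) : nu d (c • v) = c ^ d • nu d v :=
  LinearMap.ext fun f => by
    rw [LinearMap.smul_apply, nu_apply, nu_apply, eval_smul_of_isHomogeneous f.2, smul_eq_mul]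

lemma nu_ne_zero {v : Fin (m + 1) → K} (hv : v ≠ 0) : nu d v ≠ 0 := by
  obtain ⟨i, hi⟩ := Function.ne_iff.1 hv
  intro h
  have hpow := LinearMap.congr_fun h ⟨X i ^ d, isHomogeneous_X_pow i d⟩
  rw [nu_apply, map_pow, eval_X, LinearMap.zero_apply] at hpow
  exact pow_ne_zero d hi hpow

/-- The combination `∑ κ(p) ν_d(p)` of Veronese vectors attached to a weighted set of points. -/
noncomputable def veroneseSum (d : ℕ) : (Pm K m →₀ K) →ₗ[K] Module.Dual K (Hd K m d) :=
  Finsupp.linearCombination K fun p => nu d p.rep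

lemma veroneseSum_apply (κ : Pm K m →₀ K) (f : Hd K m d) :
    veroneseSum d κ f = evalSum κ (f : PR K m) := by
  simp only [veroneseSum, evalSum_apply, Finsupp.linearCombination_apply, Finsupp.sum,
    LinearMap.sum_apply, LinearMap.smul_apply, nu_apply, smul_eq_mul]

lemma veroneseSum_single (p : Pm K m) (c : K) :
    veroneseSum d (Finsupp.single p c) = c • nu d p.rep :=
  Finsupp.linearCombination_single ..

/-- The coefficient of `t ^ i` in the restriction of a form of degree `d` to `p + t q`. -/
noncomputable def jet (d : ℕ) (p q : Fin (m + 1) → K) (i : ℕ) : Module.Dual K (Hd K m d) :=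
  Polynomial.lcoeff K i ∘ₗ (restrictLine p q).toLinearMap ∘ₗ (Hd K m d).subtype

lemma jet_apply (p q : Fin (m + 1) → K) (i : ℕ) (f : Hd K m d) :
    jet d p q i f = (restrictLine p q (f : PR K m)).coeff i :=
  rfl

lemma jet_zero (p q : Fin (m + 1) → K) : jet d p q 0 = nu d p :=
  LinearMap.ext fun f => by rw [jet_apply, nu_apply, coeff_zero_restrictLine]

lemma jet_degree (p q : Fin (m + 1) → K) : jet d p q d = nu d q :=
  LinearMap.ext fun f => by rw [jet_apply, nu_apply, coeff_restrictLine_degree _ _ f.2]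

lemma nu_add_smul (p q : Fin (m + 1) → K) (t : K) :
    nu d (p + t • q) = ∑ i ∈ range (d + 1), t ^ i • jet d p q i := by
  refine LinearMap.ext fun f => ?_
  rw [nu_apply, ← eval_restrictLine, Polynomial.eval_eq_sum_range'
    (Nat.lt_succ_of_le (natDegree_restrictLine_le p q f.2)), LinearMap.sum_apply]
  exact sum_congr rfl fun i _ => by rw [LinearMap.smul_apply, jet_apply, smul_eq_mul, mul_comm]

end VeroneseSums

section Pushforward

variable {K : Type} [Field K] {k m d : ℕ} (L : (Fin (k + 1) → K) →ₗ[K] (Fin (m + 1) → K))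

/-- The map of dual spaces of forms with `ν_d(v) ↦ ν_d(L v)`. -/
noncomputable def pushforward (d : ℕ) : Module.Dual K (Hd K k d) →ₗ[K] Module.Dual K (Hd K m d) :=
  ((pullback L).toLinearMap.restrict fun _ hf => isHomogeneous_pullback L hf).dualMap

lemma pushforward_apply (φ : Module.Dual K (Hd K k d)) (f : Hd K m d) :
    pushforward L d φ f = φ ⟨pullback L f, isHomogeneous_pullback L f.2⟩ :=
  rfl

lemma pushforward_nu (v : Fin (k + 1) → K) : pushforward L d (nu d v) = nu d (L v) :=
  LinearMap.ext fun f => by rw [pushforward_apply, nu_apply, nu_apply, eval_pullback]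

lemma pushforward_jet (p q : Fin (k + 1) → K) (i : ℕ) :
    pushforward L d (jet d p q i) = jet d (L p) (L q) i :=
  LinearMap.ext fun f => by rw [pushforward_apply, jet_apply, jet_apply, restrictLine_pullback]

lemma pushforward_leftInverse [Infinite K] {L : (Fin (k + 1) → K) →ₗ[K] (Fin (m + 1) → K)}
    {L' : (Fin (m + 1) → K) →ₗ[K] (Fin (k + 1) → K)} (h : L' ∘ₗ L = LinearMap.id)
    (φ : Module.Dual K (Hd K k d)) : pushforward L' d (pushforward L d φ) = φ := by
  refine LinearMap.ext fun f => ?_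
  rw [pushforward_apply, pushforward_apply]
  congr 1
  refine Subtype.ext (MvPolynomial.funext fun v => ?_)
  rw [eval_pullback, eval_pullback]
  exact congrArg (eval · f.1) (LinearMap.congr_fun h v)

end Pushforward

section Rank

variable {K : Type} [Field K] {m d : ℕ}

/-- `φ` is a combination of the Veronese vectors of at most `r` points: it has symmetric rank at
most `r`. -/
def RankLE (d r : ℕ) (φ : Module.Dual K (Hd K m d)) : Prop :=
  ∃ κ : Pm K m →₀ K, #κ.support ≤ r ∧ veroneseSum d κ = φ

lemma RankLE.mono {r s : ℕ} {φ : Module.Dual K (Hd K m d)} (h : RankLE d r φ) (hrs : r ≤ s) :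
    RankLE d s φ := by
  obtain ⟨κ, hκ, hφ⟩ := h
  exact ⟨κ, hκ.trans hrs, hφ⟩

lemma rankLE_zero : RankLE d 0 (0 : Module.Dual K (Hd K m d)) :=
  ⟨0, by rw [Finsupp.support_zero, card_empty], map_zero _⟩

lemma RankLE.add {r s : ℕ} {φ ψ : Module.Dual K (Hd K m d)} (hφ : RankLE d r φ)
    (hψ : RankLE d s ψ) : RankLE d (r + s) (φ + ψ) := by
  classical
  obtain ⟨κ, hκ, rfl⟩ := hφ
  obtain ⟨lam, hlam, rfl⟩ := hψ
  exact ⟨κ + lam, (card_le_card Finsupp.support_add).trans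
    ((card_union_le _ _).trans (add_le_add hκ hlam)), map_add _ _ _⟩

lemma RankLE.sum {ι : Type} {s : Finset ι} {r : ι → ℕ} {φ : ι → Module.Dual K (Hd K m d)}
    (h : ∀ i ∈ s, RankLE d (r i) (φ i)) : RankLE d (∑ i ∈ s, r i) (∑ i ∈ s, φ i) := by
  classical
  induction s using Finset.induction_on with
  | empty => exact rankLE_zero
  | insert i s hi ih =>
    rw [sum_insert hi, sum_insert hi]
    exact (h i (mem_insert_self i s)).add (ih fun j hj => h j (mem_insert_of_mem hj))

lemma RankLE.smul {r : ℕ} {φ : Module.Dual K (Hd K m d)} (h : RankLE d r φ) (c : K) :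
    RankLE d r (c • φ) := by
  obtain ⟨κ, hκ, rfl⟩ := h
  exact ⟨c • κ, (card_le_card Finsupp.support_smul).trans hκ, map_smul _ _ _⟩

lemma rankLE_nu_of_ne_zero {v : Fin (m + 1) → K} (hv : v ≠ 0) : RankLE d 1 (nu d v) := by
  obtain ⟨a, ha⟩ := Projectivization.exists_smul_eq_mk_rep K v hv
  refine ⟨Finsupp.single (Projectivization.mk K v hv) ((a : K) ^ d)⁻¹,
    (card_le_card Finsupp.support_single_subset).trans (card_singleton _).le, ?_⟩
  rw [veroneseSum_single, ← ha, Units.smul_def, nu_smul, inv_smul_smul₀ (pow_ne_zero d a.ne_zero)]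

lemma rankLE_nu (hd : d ≠ 0) (v : Fin (m + 1) → K) : RankLE d 1 (nu d v) := by
  rcases eq_or_ne v 0 with rfl | hv
  · rw [← zero_smul K (0 : Fin (m + 1) → K), nu_smul, zero_pow hd, zero_smul]
    exact rankLE_zero.mono zero_le_one
  · exact rankLE_nu_of_ne_zero hv

lemma rankLE_sum_smul_nu {ι : Type} (hd : d ≠ 0) (s : Finset ι) (α : ι → K)
    (v : ι → Fin (m + 1) → K) : RankLE d #s (∑ j ∈ s, α j • nu d (v j)) := by
  rw [card_eq_sum_ones]
  exact RankLE.sum fun j _ => (rankLE_nu hd _).smul _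

lemma RankLE.pushforward {k r : ℕ} (hd : d ≠ 0)
    (L : (Fin (k + 1) → K) →ₗ[K] (Fin (m + 1) → K)) {φ : Module.Dual K (Hd K k d)}
    (h : RankLE d r φ) : RankLE d r (pushforward L d φ) := by
  obtain ⟨κ, hκ, rfl⟩ := h
  refine RankLE.mono ?_ hκ
  simp only [veroneseSum, Finsupp.linearCombination_apply, Finsupp.sum, map_sum, map_smul,
    pushforward_nu]
  exact rankLE_sum_smul_nu hd _ _ _

lemma rankLE_iff_exists_mem_span {r : ℕ} {φ : Module.Dual K (Hd K m d)} :
    RankLE d r φ ↔ ∃ T : Finset (Pm K m), #T ≤ r ∧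
      φ ∈ Submodule.span K ((fun p : Pm K m => nu d p.rep) '' T) := by
  constructor
  · rintro ⟨κ, hκ, rfl⟩
    exact ⟨κ.support, hκ, (Finsupp.mem_span_image_iff_linearCombination K).2
      ⟨κ, (Finsupp.mem_supported K κ).2 subset_rfl, rfl⟩⟩
  · rintro ⟨T, hT, hφ⟩
    obtain ⟨κ, hκT, hκ⟩ := (Finsupp.mem_span_image_iff_linearCombination K).1 hφ
    exact ⟨κ, (card_le_card (coe_subset.1 ((Finsupp.mem_supported K κ).1 hκT))).trans hT, hκ⟩

lemma rankLE_iff_exists_subset_XSet {r : ℕ} {φ : Module.Dual K (Hd K m d)} :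
    RankLE d r φ ↔ ∃ S : Finset (PN K m d), ↑S ⊆ XSet K m d ∧ #S ≤ r ∧
      φ ∈ Submodule.span K (Projectivization.rep '' (S : Set (PN K m d))) := by
  classical
  rw [rankLE_iff_exists_mem_span]
  constructor
  · rintro ⟨T, hT, hφ⟩
    have hne (p : Pm K m) : nu d p.rep ≠ 0 := nu_ne_zero p.rep_nonzero
    let point (p : Pm K m) : PN K m d := Projectivization.mk K _ (hne p)
    refine ⟨T.image point, ?_, card_image_le.trans hT, Submodule.span_le.2 ?_ hφ⟩
    · intro Q hQ
      obtain ⟨p, -, rfl⟩ := mem_image.1 (mem_coe.1 hQ)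
      exact ⟨p, Projectivization.submodule_mk _ _⟩
    · rintro _ ⟨p, hp, rfl⟩
      obtain ⟨a, ha⟩ := Projectivization.exists_smul_eq_mk_rep K _ (hne p)
      have hmem := Submodule.subset_span (R := K) (Set.mem_image_of_mem Projectivization.rep
        (mem_coe.2 (mem_image_of_mem point hp)))
      exact (Submodule.smul_mem_iff_of_isUnit _ a.isUnit).1 (by rwa [← Units.smul_def, ha])
  · rintro ⟨S, hS, hcard, hφ⟩
    choose! a ha using hS
    refine ⟨S.image a, card_image_le.trans hcard, Submodule.span_le.2 ?_ hφ⟩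
    rintro _ ⟨Q, hQ, rfl⟩
    have hmem : Q.rep ∈ Q.submodule := by
      rw [Projectivization.submodule_eq]
      exact Submodule.mem_span_singleton_self _
    rw [ha hQ] at hmem
    exact Submodule.span_mono (Set.singleton_subset_iff.2
      (Set.mem_image_of_mem _ (mem_coe.2 (mem_image_of_mem a hQ)))) hmem

lemma rankLE_mk_rep_iff {r : ℕ} {φ : Module.Dual K (Hd K m d)} (hφ : φ ≠ 0) :
    RankLE d r (Projectivization.mk K φ hφ).rep ↔ RankLE d r φ := by
  obtain ⟨a, ha⟩ := Projectivization.exists_smul_eq_mk_rep K φ hφ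
  rw [← ha, Units.smul_def]
  refine ⟨fun h => ?_, fun h => h.smul _⟩
  simpa only [inv_smul_smul₀ a.ne_zero] using h.smul (a : K)⁻¹

lemma srank_mk {r : ℕ} {φ : Module.Dual K (Hd K m d)} (hφ : φ ≠ 0) (hr : RankLE d r φ)
    (hmin : ∀ n, RankLE d n φ → r ≤ n) : srank d (Projectivization.mk K φ hφ) = r := by
  have hle {n : ℕ} (h : RankLE d n (Projectivization.mk K φ hφ).rep) : r ≤ n :=
    hmin n ((rankLE_mk_rep_iff hφ).1 h)
  obtain ⟨S, hS, hcard, hmem⟩ := rankLE_iff_exists_subset_XSet.1 ((rankLE_mk_rep_iff hφ).2 hr)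
  have hSr := hcard.antisymm (hle (rankLE_iff_exists_subset_XSet.2 ⟨S, hS, le_rfl, hmem⟩))
  refine le_antisymm (Nat.sInf_le ⟨S, hS, hSr, hmem⟩) (le_csInf ⟨r, S, hS, hSr, hmem⟩ ?_)
  rintro n ⟨T, hT, rfl, hmemT⟩
  exact hle (rankLE_iff_exists_subset_XSet.2 ⟨T, hT, le_rfl, hmemT⟩)

end Rank

section BorderRank

variable {K : Type} [Field K] {m d : ℕ}

lemma comp_mem_polyFunctions {V W : Type} [AddCommGroup V] [Module K V] [AddCommGroup W]
    [Module K W] (T : V →ₗ[K] W) {F : W → K} (hF : F ∈ polyFunctions K W) :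
    F ∘ T ∈ polyFunctions K V := by
  induction hF using Algebra.adjoin_induction with
  | mem _ h =>
    obtain ⟨φ, rfl⟩ := h
    exact Algebra.subset_adjoin ⟨φ ∘ₗ T, rfl⟩
  | algebraMap c => exact Subalgebra.algebraMap_mem _ c
  | add _ _ _ _ hF hG => exact add_mem hF hG
  | mul _ _ _ _ hF hG => exact mul_mem hF hG

/-- `φ` is in the closure of the functionals of rank at most `s`: it has border rank at most `s`. -/
def BorderRankLE (d s : ℕ) (φ : Module.Dual K (Hd K m d)) : Prop :=
  ∀ F ∈ polyFunctions K (Module.Dual K (Hd K m d)), (∀ ψ, RankLE d s ψ → F ψ = 0) → F φ = 0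

lemma BorderRankLE.map {k s : ℕ} {T : Module.Dual K (Hd K k d) →ₗ[K] Module.Dual K (Hd K m d)}
    (hT : ∀ ψ, RankLE d s ψ → RankLE d s (T ψ)) {φ : Module.Dual K (Hd K k d)}
    (h : BorderRankLE d s φ) : BorderRankLE d s (T φ) := fun F hF hF0 =>
  h (F ∘ T) (comp_mem_polyFunctions T hF) fun ψ hψ => hF0 _ (hT ψ hψ)

lemma BorderRankLE.smul {s : ℕ} {φ : Module.Dual K (Hd K m d)} (h : BorderRankLE d s φ) (c : K) :
    BorderRankLE d s (c • φ) :=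
  h.map (T := c • LinearMap.id) fun _ hψ => hψ.smul c

lemma mem_secantWrt_XSet_iff {s : ℕ} (hs : 0 < s) (P : PN K m d) :
    P ∈ secantWrt (XSet K m d) s ↔ BorderRankLE d s P.rep := by
  have hmem : P ∈ secantWrt (XSet K m d) s ↔ ∀ F ∈ polyFunctions K (Module.Dual K (Hd K m d)),
      (∀ Q : PN K m d, RankLE d s Q.rep → ∀ c : K, F (c • Q.rep) = 0) →
        ∀ c : K, F (c • P.rep) = 0 := by
    simp only [rankLE_iff_exists_subset_XSet]
    rfl
  rw [hmem]
  refine ⟨fun h F hF hF0 => ?_, fun h F hF hF0 c => h.smul c F hF fun ψ hψ => ?_⟩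
  · rw [← one_smul K P.rep]
    exact h F hF (fun Q hQ c => hF0 _ (hQ.smul c)) 1
  · rcases eq_or_ne ψ 0 with rfl | hψ0
    · have hv : (Pi.single 0 1 : Fin (m + 1) → K) ≠ 0 := Pi.single_ne_zero_iff.2 one_ne_zero
      rw [← zero_smul K (Projectivization.mk K _ (nu_ne_zero (d := d) hv)).rep]
      exact hF0 _ ((rankLE_mk_rep_iff _).2 ((rankLE_nu_of_ne_zero hv).mono hs)) 0
    · obtain ⟨a, ha⟩ := Projectivization.exists_smul_eq_mk_rep K ψ hψ0
      rw [← inv_smul_smul a ψ, ha]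
      exact hF0 _ ((rankLE_mk_rep_iff hψ0).2 hψ) _

lemma brank_mk {s : ℕ} {φ : Module.Dual K (Hd K m d)} (hφ : φ ≠ 0) (hs0 : 0 < s)
    (hs : BorderRankLE d s φ) (hmin : ∀ n, BorderRankLE d n φ → s ≤ n) :
    brank d (Projectivization.mk K φ hφ) = s := by
  obtain ⟨a, ha⟩ := Projectivization.exists_smul_eq_mk_rep K φ hφ
  have hmem {n : ℕ} (hn : 0 < n) : Projectivization.mk K φ hφ ∈ secantWrt (XSet K m d) n ↔
      BorderRankLE d n φ := by
    rw [mem_secantWrt_XSet_iff hn, ← ha, Units.smul_def]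
    refine ⟨fun h => ?_, fun h => h.smul _⟩
    simpa only [inv_smul_smul₀ a.ne_zero] using h.smul (a : K)⁻¹
  have hsmem : s ∈ {n | 0 < n ∧ Projectivization.mk K φ hφ ∈ secantWrt (XSet K m d) n} :=
    ⟨hs0, (hmem hs0).2 hs⟩
  exact le_antisymm (Nat.sInf_le hsmem)
    (le_csInf ⟨s, hsmem⟩ fun n hn => hmin n ((hmem hn.1).1 hn.2))

end BorderRank

section JetBound

variable {K : Type} [Field K]

lemma exists_eq_X_pow_mul {p : Polynomial K} (hp : p ≠ 0) :
    ∃ v ≤ p.natDegree, ∃ u : Polynomial K, p = Polynomial.X ^ v * u ∧ u.coeff 0 ≠ 0 := by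
  obtain ⟨u, hpu, hu⟩ := Polynomial.exists_eq_pow_rootMultiplicity_mul_and_not_dvd p hp 0
  rw [Polynomial.C_0, sub_zero] at hpu hu
  refine ⟨_, ?_, u, hpu, fun h => hu (Polynomial.X_dvd_iff.2 h)⟩
  classical
  exact p.count_roots ▸ (Multiset.count_le_card 0 p.roots).trans p.card_roots'

variable {m : ℕ}

lemma eval_rep_mk_eq_zero {v : Fin (m + 1) → K} (hv : v ≠ 0) {f : PR K m} {n : ℕ}
    (hf : f.IsHomogeneous n) (hfv : eval v f = 0) :
    eval (Projectivization.mk K v hv).rep f = 0 := by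
  obtain ⟨a, ha⟩ := Projectivization.exists_smul_eq_mk_rep K v hv
  rw [← ha, Units.smul_def, eval_smul_of_isHomogeneous hf, hfv, mul_zero]

lemma eq_zero_of_restrictLine_eq_X_pow_mul {p q : Fin (m + 1) → K} (hp : p ≠ 0) {g : PR K m}
    {i v : ℕ} (hg : g.IsHomogeneous i) {u : Polynomial K}
    (hgu : restrictLine p q g = Polynomial.X ^ v * u)
    (hgp : eval (Projectivization.mk K p hp).rep g ≠ 0) : v = 0 := by
  by_contra hv
  refine hgp (eval_rep_mk_eq_zero hp hg ?_)
  rw [← coeff_zero_restrictLine p q, hgu, Polynomial.mul_coeff_zero, Polynomial.coeff_X_pow,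
    if_neg (Ne.symm hv), zero_mul]

/-- Test on `g * y ^ (b - v) * s`, where `s` separates the base point from all the other points. -/
lemma add_le_card_support_residue_of_eq_coeff {p q : Fin (m + 1) → K} (hp : p ≠ 0) {y : PR K m}
    (hy : y.IsHomogeneous 1) (hyX : restrictLine p q y = Polynomial.X) {κ : Pm K m →₀ K}
    {g : PR K m} {b d i v : ℕ} (hg : g.IsHomogeneous i) {u : Polynomial K}
    (hgu : restrictLine p q g = Polynomial.X ^ v * u) (hu : u.coeff 0 ≠ 0) (hb : b ≠ 0)
    (hvb : v ≤ b)
    (h : ∀ f : PR K m, f.IsHomogeneous d → g ∣ f → Polynomial.X ^ b ∣ restrictLine p q f →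
      evalSum κ f = (restrictLine p q f).coeff b) :
    d + 1 + v ≤ #(residue g κ).support + i + b := by
  classical
  by_contra! hlt
  obtain ⟨s, hs, hsT, hsp⟩ := exists_form_separating
    ((residue g κ).support.erase (Projectivization.mk K p hp)) hp (notMem_erase _ _)
    (n := d - i - (b - v)) ((card_erase_le).trans (by omega))
  have hf : (g * (y ^ (b - v) * s)).IsHomogeneous d := by
    convert hg.mul ((hy.pow (b - v)).mul hs) using 1
    omega
  have hrestrict : restrictLine p q (g * (y ^ (b - v) * s)) =
      Polynomial.X ^ b * (u * restrictLine p q s) := by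
    rw [map_mul, map_mul, map_pow, hyX, hgu, ← Nat.add_sub_cancel' hvb, pow_add,
      Nat.add_sub_cancel_left]
    ring
  have hcoeff : (restrictLine p q (g * (y ^ (b - v) * s))).coeff b ≠ 0 := by
    rw [hrestrict, Polynomial.coeff_X_pow_mul', if_pos le_rfl, Nat.sub_self,
      Polynomial.mul_coeff_zero, coeff_zero_restrictLine]
    exact mul_ne_zero hu hsp
  have hzero : residue (y ^ (b - v) * s) (residue g κ) = 0 := by
    refine residue_eq_zero_iff.2 fun P hP => ?_
    rw [map_mul, mul_eq_zero]
    by_cases hPp : P = Projectivization.mk K p hp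
    · left
      subst hPp
      have hv := eq_zero_of_restrictLine_eq_X_pow_mul hp hg hgu (mem_support_residue.1 hP).1
      rw [map_pow, eval_rep_mk_eq_zero hp hy
        (by rw [← coeff_zero_restrictLine p q, hyX, Polynomial.coeff_X_zero]), hv, Nat.sub_zero,
        zero_pow hb]
    · exact Or.inr (hsT P (mem_erase.2 ⟨hPp, hP⟩))
  refine hcoeff ?_
  rw [← h _ hf (dvd_mul_right _ _) (hrestrict ▸ dvd_mul_right _ _), ← mul_one (g * _),
    ← evalSum_residue, mul_comm g, residue_mul, hzero, map_zero, LinearMap.zero_apply]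

end JetBound

section Plane

variable {K : Type} [Field K]

/-- Restriction to the line `D = {X₂ = 0}` of the plane, with the point `O = (1 : 0 : 0)` at
parameter `0`. -/
noncomputable abbrev restrictD : PR K 2 →ₐ[K] Polynomial K :=
  restrictLine (Pi.single 0 1) (Pi.single 1 1)

/-- Restriction to the line `R = {X₁ = 0}` of the plane, with the point `O' = (0 : 0 : 1)` at
parameter `0` and `O = (1 : 0 : 0)` at infinity. -/
noncomputable abbrev restrictR : PR K 2 →ₐ[K] Polynomial K :=
  restrictLine (Pi.single 2 1) (Pi.single 0 1)

lemma restrictD_X_zero : restrictD (X 0 : PR K 2) = 1 := by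
  simp [restrictLine_X]

lemma restrictD_X_one : restrictD (X 1 : PR K 2) = Polynomial.X := by
  simp [restrictLine_X]

lemma restrictD_X_two : restrictD (X 2 : PR K 2) = 0 := by
  simp [restrictLine_X]

lemma restrictR_X_zero : restrictR (X 0 : PR K 2) = Polynomial.X := by
  simp [restrictLine_X]

lemma restrictR_X_one : restrictR (X 1 : PR K 2) = 0 := by
  simp [restrictLine_X]

lemma restrictR_X_two : restrictR (X 2 : PR K 2) = 1 := by
  simp [restrictLine_X]

/-- A functional in the span of `ν_d(A₁ ∪ A₂)`, where `A₁ ⊂ D` and `A₂ ⊂ R` are the subschemes of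
degree `w` supported at `O` and at `O'`. The summand at `O` does not affect the border rank; it
lowers the rank by one, because `R` passes through `O`. -/
noncomputable def crossJet (K : Type) [Field K] (d w : ℕ) : Module.Dual K (Hd K 2 d) :=
  jet d (Pi.single 0 1) (Pi.single 1 1) (w - 1) + nu d (Pi.single 0 1) +
    jet d (Pi.single 2 1) (Pi.single 0 1) (w - 1)

lemma not_dvd_of_not_liesOnCurve {κ : Pm K 2 →₀ K} {a n : ℕ} {f g : PR K 2}
    (hg : g.IsHomogeneous a) (hgκ : ∀ p ∈ κ.support, eval p.rep g ≠ 0)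
    (hno : ¬ LiesOnCurve n κ) (hf0 : f ≠ 0) (hf : f.IsHomogeneous (a + n))
    (hfκ : residue f κ = 0) : ¬ g ∣ f := by
  intro hdvd
  obtain ⟨c, hc, rfl⟩ := exists_isHomogeneous_eq_mul_of_dvd hg hf hdvd
  refine hno ⟨c, right_ne_zero_of_mul hf0, hc, residue_eq_zero_iff.2 fun p hp => ?_⟩
  have hfp := residue_eq_zero_iff.1 hfκ p hp
  rw [map_mul] at hfp
  exact (mul_eq_zero.1 hfp).resolve_left (hgκ p hp)

lemma not_liesOnCurve_zero {κ : Pm K 2 →₀ K} (hκ : κ ≠ 0) : ¬ LiesOnCurve 0 κ := by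
  rintro ⟨f, hf0, hf, hfκ⟩
  rw [totalDegree_eq_zero_iff_eq_C.1 (Nat.le_zero.1 hf.totalDegree_le)] at hf0 hfκ
  obtain ⟨p, hp⟩ := Finsupp.support_nonempty_iff.2 hκ
  have hfp := residue_eq_zero_iff.1 hfκ p hp
  rw [eval_C] at hfp
  exact hf0 (by rw [hfp, C_0])

variable {d w i v : ℕ} {κ : Pm K 2 →₀ K}

lemma evalSum_of_veroneseSum_eq_crossJet (hκ : veroneseSum d κ = crossJet K d w) {f : PR K 2}
    (hf : f.IsHomogeneous d) : evalSum κ f = (restrictD f).coeff (w - 1) +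
      (restrictD f).coeff 0 + (restrictR f).coeff (w - 1) := by
  rw [coeff_zero_restrictLine]
  have h := LinearMap.congr_fun hκ ⟨f, hf⟩
  rwa [veroneseSum_apply, crossJet, LinearMap.add_apply, LinearMap.add_apply, jet_apply, jet_apply,
    nu_apply] at h

lemma isRelation_residue_of_veroneseSum_eq_crossJet
    (hκ : veroneseSum (2 + d) κ = crossJet K (2 + d) w) : IsRelation d (residue (X 1 * X 2) κ) := by
  intro f hf
  rw [evalSum_residue, evalSum_of_veroneseSum_eq_crossJet hκ
    (((isHomogeneous_X K 1).mul (isHomogeneous_X K 2)).mul hf)]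
  simp only [map_mul, restrictD_X_two, restrictR_X_one, mul_zero, zero_mul, Polynomial.coeff_zero,
    add_zero]

lemma add_two_le_card_support_residue_of_restrictD (hw : 2 ≤ w)
    (hκ : veroneseSum d κ = crossJet K d w) {g : PR K 2} (hg : g.IsHomogeneous i)
    (hgR : Polynomial.X ^ w ∣ restrictR g) {u : Polynomial K}
    (hgD : restrictD g = Polynomial.X ^ v * u) (hu : u.coeff 0 ≠ 0) (hv : v < w) :
    d + 2 + v ≤ #(residue g κ).support + i + w := by
  have := add_le_card_support_residue_of_eq_coeff (Pi.single_ne_zero_iff.2 one_ne_zero)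
    (isHomogeneous_X K 1) restrictD_X_one (κ := κ) (d := d) hg hgD hu (b := w - 1) (by omega)
    (by omega) fun f hf hgf hfD => by
      rw [evalSum_of_veroneseSum_eq_crossJet hκ hf, Polynomial.X_pow_dvd_iff.1 hfD 0 (by omega),
        Polynomial.X_pow_dvd_iff.1 (hgR.trans (map_dvd _ hgf)) (w - 1) (by omega), add_zero,
        add_zero]
  omega

lemma add_two_le_card_support_residue_of_restrictR (hw : 2 ≤ w)
    (hκ : veroneseSum d κ = crossJet K d w) {g : PR K 2} (hg : g.IsHomogeneous i)
    (hgD : restrictD g = 0) {u : Polynomial K}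
    (hgR : restrictR g = Polynomial.X ^ v * u) (hu : u.coeff 0 ≠ 0) (hv : v < w) :
    d + 2 + v ≤ #(residue g κ).support + i + w := by
  have := add_le_card_support_residue_of_eq_coeff (Pi.single_ne_zero_iff.2 one_ne_zero)
    (isHomogeneous_X K 0) restrictR_X_zero (κ := κ) (d := d) hg hgR hu (b := w - 1) (by omega)
    (by omega) fun f hf hgf _ => by
      have hfD : restrictD f = 0 := zero_dvd_iff.1 (hgD ▸ map_dvd restrictD hgf)
      rw [evalSum_of_veroneseSum_eq_crossJet hκ hf, hfD, Polynomial.coeff_zero,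
        Polynomial.coeff_zero, zero_add, zero_add]
  omega

lemma two_mul_add_three_le_card_support (hw : 2 ≤ w) (hκ : veroneseSum d κ = crossJet K d w)
    (hoff : residue (X 1 * X 2) κ = 0) : 2 * d + 3 ≤ #κ.support + 2 * w := by
  have hD := add_two_le_card_support_residue_of_restrictD hw hκ (isHomogeneous_X K 1)
    (restrictR_X_one (K := K) ▸ dvd_zero _) (v := 1) (u := 1)
    (by rw [restrictD_X_one, pow_one, mul_one]) (by simp) (by omega)
  have hR := add_two_le_card_support_residue_of_restrictR hw hκ (isHomogeneous_X K 2)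
    restrictD_X_two (v := 0) (u := 1) (by rw [restrictR_X_two, pow_zero, mul_one]) (by simp)
    (by omega)
  have hcard := card_support_residue_add_le hoff
  omega

variable [Infinite K]

lemma restrictD_ne_zero_of_not_liesOnCurve {n : ℕ}
    (hno : ¬ LiesOnCurve n (residue (X 1 * X 2) κ)) {f : PR K 2} (hf0 : f ≠ 0)
    (hf : f.IsHomogeneous (1 + n)) (hfκ : residue f (residue (X 1 * X 2) κ) = 0) :
    restrictD f ≠ 0 := fun h =>
  not_dvd_of_not_liesOnCurve (isHomogeneous_X K 2)
    (fun _ hp => right_ne_zero_of_mul (by rw [← map_mul]; exact (mem_support_residue.1 hp).1))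
    hno hf0 hf hfκ (X_dvd_of_restrictLine_eq_zero (by decide) (by decide) hf h)

lemma restrictR_ne_zero_of_not_liesOnCurve {n : ℕ}
    (hno : ¬ LiesOnCurve n (residue (X 1 * X 2) κ)) {f : PR K 2} (hf0 : f ≠ 0)
    (hf : f.IsHomogeneous (1 + n)) (hfκ : residue f (residue (X 1 * X 2) κ) = 0) :
    restrictR f ≠ 0 := fun h =>
  not_dvd_of_not_liesOnCurve (isHomogeneous_X K 1)
    (fun _ hp => left_ne_zero_of_mul (by rw [← map_mul]; exact (mem_support_residue.1 hp).1))
    hno hf0 hf hfκ (X_dvd_of_restrictLine_eq_zero (by decide) (by decide) hf h)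

lemma two_mul_add_one_le_card_support_residue_line (hw : 3 ≤ w)
    (hκ : veroneseSum d κ = crossJet K d w) (hoff : residue (X 1 * X 2) κ ≠ 0) {l : PR K 2}
    (hl0 : l ≠ 0) (hl : l.IsHomogeneous 1) (hlκ : residue l (residue (X 1 * X 2) κ) = 0) :
    2 * d + 1 ≤ #(residue l κ).support + 2 * w := by
  have hno := not_liesOnCurve_zero hoff
  obtain ⟨v, hv, u, hvu, hu⟩ :=
    exists_eq_X_pow_mul (restrictD_ne_zero_of_not_liesOnCurve hno hl0 hl hlκ)
  obtain ⟨v', hv', u', hvu', hu'⟩ :=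
    exists_eq_X_pow_mul (restrictR_ne_zero_of_not_liesOnCurve hno hl0 hl hlκ)
  have hv1 := hv.trans (natDegree_restrictLine_le _ _ hl)
  have hv1' := hv'.trans (natDegree_restrictLine_le _ _ hl)
  have hD := add_two_le_card_support_residue_of_restrictD (by omega) hκ
    ((isHomogeneous_X K 1).mul hl) (by rw [map_mul, restrictR_X_one, zero_mul]; exact dvd_zero _)
    (v := v + 1) (by rw [map_mul, restrictD_X_one, hvu]; ring) hu (by omega)
  have hR := add_two_le_card_support_residue_of_restrictR (by omega) hκ
    ((isHomogeneous_X K 2).mul hl) (by rw [map_mul, restrictD_X_two, zero_mul])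
    (by rw [map_mul, restrictR_X_two, one_mul, hvu']) hu' (by omega)
  rw [residue_mul] at hD hR
  have hcard := card_support_residue_add_le (f := X 1) (g := X 2) (κ := residue l κ)
    (by rwa [← residue_mul, mul_comm, residue_mul])
  omega

lemma le_card_support_residue_conic (hw : 3 ≤ w) (hκ : veroneseSum d κ = crossJet K d w)
    (hno : ¬ LiesOnCurve 1 (residue (X 1 * X 2) κ)) {Q : PR K 2} (hQ0 : Q ≠ 0)
    (hQ : Q.IsHomogeneous 2) (hQκ : residue Q (residue (X 1 * X 2) κ) = 0) :
    d ≤ #(residue Q κ).support + 2 * w := by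
  obtain ⟨v, hv, u, hvu, hu⟩ :=
    exists_eq_X_pow_mul (restrictD_ne_zero_of_not_liesOnCurve hno hQ0 hQ hQκ)
  have hv2 := hv.trans (natDegree_restrictLine_le _ _ hQ)
  have hD := add_two_le_card_support_residue_of_restrictD (by omega) hκ
    ((isHomogeneous_X_pow 0 w).mul hQ)
    (by rw [map_mul, map_pow, restrictR_X_zero]; exact dvd_mul_right _ _)
    (by rw [map_mul, map_pow, restrictD_X_zero, one_pow, one_mul, hvu]) hu (by omega)
  rw [residue_mul] at hD
  have hcard := card_le_card (support_residue_subset (X 0 ^ w) (residue Q κ))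
  omega

/-- Off `D ∪ R` the weights form a relation in degree `d - 2`, so they are many unless they lie
on a line or a conic; such a curve leaves many points on `D ∪ R`. -/
lemma three_mul_le_card_support (hw : 3 ≤ w) (hκ : veroneseSum d κ = crossJet K d w)
    (hoff : residue (X 1 * X 2) κ ≠ 0) : 3 * d ≤ #κ.support + 2 * w + 2 := by
  obtain hd | ⟨e, rfl⟩ : d < 2 ∨ ∃ e, d = 2 + e := by
    by_cases hd : d < 2
    exacts [Or.inl hd, Or.inr (Nat.exists_eq_add_of_le (not_lt.1 hd))]
  · omega
  have hrel := isRelation_residue_of_veroneseSum_eq_crossJet hκ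
  have hsub := card_le_card (support_residue_subset (X 1 * X 2) κ)
  have hcard {f : PR K 2} (hf : residue f (residue (X 1 * X 2) κ) = 0) :=
    card_support_residue_add_le (by rwa [residue_mul] : residue (f * (X 1 * X 2)) κ = 0)
  by_cases hline : LiesOnCurve 1 (residue (X 1 * X 2) κ)
  · obtain ⟨l, hl0, hl, hlκ⟩ := hline
    have honD := two_mul_add_one_le_card_support_residue_line hw hκ hoff hl0 hl hlκ
    have hS := hrel.add_two_le_card_support hoff
    have := hcard hlκ
    omega
  have hS := two_mul_add_two_le_card_of_not_liesOnCurve_one hrel hline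
  by_cases hconic : LiesOnCurve 2 (residue (X 1 * X 2) κ)
  · obtain ⟨Q, hQ0, hQ, hQκ⟩ := hconic
    have honD := le_card_support_residue_conic hw hκ hline hQ0 hQ hQκ
    have := hcard hQκ
    omega
  · have := mt hrel.liesOnCurve_two hconic
    omega

end Plane

section Quadrature

variable {K : Type} [Field K]

lemma geom_sum_of_pow_eq_one {n : ℕ} {x : K} (hx : x ^ n = 1) (hx1 : x ≠ 1) :
    ∑ j ∈ range n, x ^ j = 0 := by
  have h := mul_geom_sum x n
  rw [hx, sub_self] at h
  exact (mul_eq_zero.1 h).resolve_left (sub_ne_zero.2 hx1)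

lemma exists_sum_mul_pow_eq_ite [IsAlgClosed K] [CharZero K] {e n : ℕ} (he : e < n) :
    ∃ α a : ℕ → K, ∀ i ≤ e + n,
      ∑ j ∈ range n, α j * a j ^ i = if i = e ∨ i = e + n then 1 else 0 := by
  have hn : (n : K) ≠ 0 := Nat.cast_ne_zero.2 (by omega)
  have : NeZero (n : K) := ⟨hn⟩
  obtain ⟨z, hz⟩ := HasEnoughRootsOfUnity.exists_primitiveRoot K n
  refine ⟨fun j => (n : K)⁻¹ * (z ^ j) ^ (n - e), fun j => z ^ j, fun i hi => ?_⟩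
  have hpow (j : ℕ) : (n : K)⁻¹ * (z ^ j) ^ (n - e) * (z ^ j) ^ i =
      (n : K)⁻¹ * (z ^ (n - e + i)) ^ j := by
    rw [mul_assoc, ← pow_add, pow_right_comm]
  have hdvd : n ∣ n - e + i ↔ i = e ∨ i = e + n := by
    refine ⟨?_, ?_⟩
    · rintro ⟨c, hc⟩
      obtain rfl | rfl | rfl | hc3 : c = 0 ∨ c = 1 ∨ c = 2 ∨ 3 ≤ c := by omega
      · omega
      · omega
      · omega
      · have := Nat.mul_le_mul_left n hc3
        omega
    · rintro (rfl | rfl)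
      · exact ⟨1, by omega⟩
      · exact ⟨2, by omega⟩
  simp only [hpow, ← mul_sum]
  split_ifs with h
  · rw [(hz.pow_eq_one_iff_dvd _).2 (hdvd.2 h)]
    simp only [one_pow, sum_const, card_range, nsmul_eq_mul, mul_one, inv_mul_cancel₀ hn]
  · rw [geom_sum_of_pow_eq_one, mul_zero]
    · rw [pow_right_comm, hz.pow_eq_one, one_pow]
    · exact fun h1 => h (hdvd.1 ((hz.pow_eq_one_iff_dvd _).1 h1))

lemma exists_sum_mul_pow_eq {n : ℕ} {a : Fin n → K} (ha : Function.Injective a) (c : Fin n → K) :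
    ∃ α : Fin n → K, ∀ i : Fin n, ∑ j, α j * a j ^ (i : ℕ) = c i := by
  have hV : IsUnit (Matrix.vandermonde a) :=
    (Matrix.isUnit_iff_isUnit_det _).2 (Matrix.det_vandermonde_ne_zero_iff.2 ha).isUnit
  obtain ⟨α, hα⟩ := Matrix.vecMul_surjective_iff_isUnit.2 hV c
  exact ⟨α, fun i => congrFun hα i⟩

variable {m d : ℕ} (p q : Fin (m + 1) → K)

lemma sum_smul_nu_add_smul {ι : Type} (s : Finset ι) (α a : ι → K) :
    ∑ j ∈ s, α j • nu d (p + a j • q) =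
      ∑ i ∈ range (d + 1), (∑ j ∈ s, α j * a j ^ i) • jet d p q i := by
  simp only [nu_add_smul, smul_sum, sum_smul, smul_smul]
  exact sum_comm

/-- The points are those where the parameter is an `n`-th root of unity, so the monomials of
degrees `e` and `e + n` are not distinguished. -/
lemma rankLE_jet_add_jet_degree [IsAlgClosed K] [CharZero K] {e n : ℕ} (he : e < n)
    (hd : e + n = d) : RankLE d n (jet d p q e + jet d p q d) := by
  obtain ⟨α, a, ha⟩ := exists_sum_mul_pow_eq_ite (K := K) he
  have hsum : ∑ j ∈ range n, α j • nu d (p + a j • q) = jet d p q e + jet d p q d := by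
    rw [sum_smul_nu_add_smul, sum_range_succ, ha d hd.ge, if_pos (Or.inr hd.symm), one_smul,
      sum_eq_single_of_mem e (mem_range.2 (by omega)), ha e (by omega), if_pos (Or.inl rfl),
      one_smul]
    intro i hi hie
    have := mem_range.1 hi
    rw [ha i (by omega), if_neg (by omega), zero_smul]
  simpa only [hsum, card_range] using
    rankLE_sum_smul_nu (d := d) (by omega) (range n) α fun j => p + a j • q

lemma rankLE_jet [IsAlgClosed K] [CharZero K] {e n : ℕ} (he : e < n) (hd : e + n = d) :
    RankLE d (n + 1) (jet d p q e) := by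
  have h := (rankLE_jet_add_jet_degree p q he hd).add ((rankLE_nu (by omega) q).smul (-1 : K))
  rwa [jet_degree, neg_one_smul K (nu d q), add_neg_cancel_right] at h

end Quadrature

section RankOfCross

variable {K : Type} [Field K] {d w : ℕ} {E : Finset (Pm K 2)}

/-- The functional of the theorem, when `U = ℙ²`: the sum of `crossJet` and of the Veronese
vectors of the points of `E`. -/
noncomputable def crossSum (d w : ℕ) (E : Finset (Pm K 2)) : Module.Dual K (Hd K 2 d) :=
  crossJet K d w + ∑ p ∈ E, nu d p.rep

lemma rankLE_sum_nu_rep {m : ℕ} (E : Finset (Pm K m)) : RankLE d #E (∑ p ∈ E, nu d p.rep) := by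
  rw [card_eq_sum_ones]
  exact RankLE.sum fun p _ => rankLE_nu_of_ne_zero p.rep_nonzero

lemma rankLE_crossSum [IsAlgClosed K] [CharZero K] (hw : 2 ≤ w) (hd : 2 * w ≤ d + 1) :
    RankLE d (2 * d + 3 + #E - 2 * w) (crossSum d w E) := by
  have hD := rankLE_jet (K := K) (d := d) (Pi.single (0 : Fin 3) 1) (Pi.single 1 1)
    (e := w - 1) (n := d - (w - 1)) (by omega) (by omega)
  have hR := rankLE_jet_add_jet_degree (K := K) (d := d) (Pi.single (2 : Fin 3) 1) (Pi.single 0 1)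
    (e := w - 1) (n := d - (w - 1)) (by omega) (by omega)
  rw [jet_degree, add_comm] at hR
  have h := ((hD.add hR).add (rankLE_sum_nu_rep E)).mono (s := 2 * d + 3 + #E - 2 * w) (by omega)
  rwa [← add_assoc] at h

lemma exists_veroneseSum_eq_sum_nu {m : ℕ} (E : Finset (Pm K m)) (d : ℕ) :
    ∃ κ : Pm K m →₀ K, κ.support = E ∧ veroneseSum d κ = ∑ p ∈ E, nu d p.rep := by
  classical
  refine ⟨∑ p ∈ E, Finsupp.single p 1, ?_, ?_⟩
  · ext p
    simp only [Finsupp.mem_support_iff, Finsupp.finsetSum_apply, Finsupp.single_apply,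
      sum_ite_eq', ne_eq, ite_eq_right_iff, one_ne_zero, imp_false, not_not]
  · simp only [map_sum, veroneseSum_single, one_smul]

lemma RankLE.two_mul_add_three_le [Infinite K] {r : ℕ} (h : RankLE d r (crossSum d w E))
    (hw : 3 ≤ w) (hd : 4 * w + 2 * #E ≤ d + 1) (hE : ∀ p ∈ E, eval p.rep (X 1 * X 2) ≠ 0) :
    2 * d + 3 + #E ≤ r + 2 * w := by
  classical
  obtain ⟨κ, hκr, hκ⟩ := h
  obtain ⟨ε, rfl, hε⟩ := exists_veroneseSum_eq_sum_nu E d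
  have hcross : veroneseSum d (κ - ε) = crossJet K d w := by
    rw [map_sub, hκ, hε, crossSum, add_sub_cancel_right]
  by_cases hoff : residue (X 1 * X 2) (κ - ε) = 0
  · have hlines := two_mul_add_three_le_card_support (by omega) hcross hoff
    have hdisj : Disjoint (κ - ε).support ε.support := disjoint_left.2 fun p hp hpE =>
      hE p hpE (residue_eq_zero_iff.1 hoff p hp)
    have hcard := congrArg card (Finsupp.support_add_eq hdisj)
    rw [sub_add_cancel, card_union_of_disjoint hdisj] at hcard
    omega
  · have hlines := three_mul_le_card_support hw hcross hoff
    have hcard := (card_le_card Finsupp.support_sub).trans (card_union_le κ.support ε.support)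
    omega

end RankOfCross

section Degeneration

variable {K : Type} [Field K]

lemma exists_forall_eq_eval_of_mem_polyFunctions {V : Type} [AddCommGroup V] [Module K V]
    {F : V → K} (hF : F ∈ polyFunctions K V) (φ : V) (n : ℕ) (v : ℕ → V) :
    ∃ P : Polynomial K, ∀ t, F (φ + ∑ i ∈ range n, t ^ (i + 1) • v i) = P.eval t := by
  induction hF using Algebra.adjoin_induction with
  | mem _ h =>
    obtain ⟨ψ, rfl⟩ := h
    refine ⟨Polynomial.C (ψ φ) +
      ∑ i ∈ range n, Polynomial.X ^ (i + 1) * Polynomial.C (ψ (v i)), fun t => ?_⟩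
    simp only [map_add, map_sum, map_smul, smul_eq_mul, Polynomial.eval_add,
      Polynomial.eval_finsetSum, Polynomial.eval_mul, Polynomial.eval_pow, Polynomial.eval_X,
      Polynomial.eval_C]
  | algebraMap c => exact ⟨Polynomial.C c, fun t => Polynomial.eval_C.symm⟩
  | add _ _ _ _ hF hG =>
    obtain ⟨P, hP⟩ := hF
    obtain ⟨Q, hQ⟩ := hG
    exact ⟨P + Q, fun t => by rw [Pi.add_apply, hP, hQ, Polynomial.eval_add]⟩
  | mul _ _ _ _ hF hG =>
    obtain ⟨P, hP⟩ := hF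
    obtain ⟨Q, hQ⟩ := hG
    exact ⟨P * Q, fun t => by rw [Pi.mul_apply, hP, hQ, Polynomial.eval_mul]⟩

variable {m d : ℕ}

lemma borderRankLE_of_forall_ne_zero [Infinite K] {s n : ℕ} {φ : Module.Dual K (Hd K m d)}
    {v : ℕ → Module.Dual K (Hd K m d)}
    (h : ∀ t : K, t ≠ 0 → RankLE d s (φ + ∑ i ∈ range n, t ^ (i + 1) • v i)) :
    BorderRankLE d s φ := by
  intro F hF hF0
  obtain ⟨P, hP⟩ := exists_forall_eq_eval_of_mem_polyFunctions hF φ n v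
  have hPX : Polynomial.X * P = 0 := by
    refine Polynomial.funext fun t => ?_
    rw [Polynomial.eval_mul, Polynomial.eval_X, Polynomial.eval_zero, mul_eq_zero]
    exact or_iff_not_imp_left.2 fun ht => (hP t).symm.trans (hF0 _ (h t ht))
  have h0 := hP 0
  rwa [(mul_eq_zero.1 hPX).resolve_left Polynomial.X_ne_zero, Polynomial.eval_zero,
    sum_eq_zero fun i _ => by rw [zero_pow i.succ_ne_zero, zero_smul], add_zero] at h0

lemma exists_sum_nu_eq_jet_add [CharZero K] (p q : Fin (m + 1) → K) {e n : ℕ} (hd : e + n = d) :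
    ∃ (α : Fin (e + 1) → K) (v : ℕ → Module.Dual K (Hd K m d)), ∀ t : K, t ≠ 0 →
      ∑ j, (t⁻¹ ^ e * α j) • nu d (p + (t * j) • q) =
        jet d p q e + ∑ i ∈ range n, t ^ (i + 1) • v i := by
  obtain ⟨α, hα⟩ := exists_sum_mul_pow_eq (K := K) (a := fun j : Fin (e + 1) => (j : K))
    (Nat.cast_injective.comp Fin.val_injective) (Pi.single (Fin.last e) 1)
  refine ⟨α, fun i => (∑ j, α j * (j : K) ^ (e + 1 + i)) • jet d p q (e + 1 + i), fun t ht => ?_⟩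
  have hmoment (i : ℕ) : ∑ j, t⁻¹ ^ e * α j * (t * (j : K)) ^ i =
      t⁻¹ ^ e * t ^ i * ∑ j, α j * (j : K) ^ i := by
    rw [mul_sum]
    exact sum_congr rfl fun j _ => by ring
  have hlow : ∀ i ∈ range e, (t⁻¹ ^ e * t ^ i * ∑ j, α j * (j : K) ^ i) • jet d p q i = 0 := by
    intro i hi
    have hie := mem_range.1 hi
    have h := hα ⟨i, hie.trans e.lt_succ_self⟩
    rw [Pi.single_eq_of_ne (Fin.ne_of_val_ne hie.ne)] at h
    rw [h, mul_zero, zero_smul]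
  have hlast : ∑ j, α j * (j : K) ^ e = 1 := by
    simpa only [Pi.single_eq_same, Fin.val_last] using hα (Fin.last e)
  have hcancel (i : ℕ) : t⁻¹ ^ e * t ^ (e + i) = t ^ i := by
    rw [pow_add, ← mul_assoc, ← mul_pow, inv_mul_cancel₀ ht, one_pow, one_mul]
  simp only [sum_smul_nu_add_smul, hmoment]
  rw [show d + 1 = e + 1 + n by omega, sum_range_add, sum_range_succ, sum_eq_zero hlow, zero_add,
    hlast, mul_one, ← mul_pow, inv_mul_cancel₀ ht, one_pow, one_smul]
  refine congrArg _ (sum_congr rfl fun i _ => ?_)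
  rw [smul_smul, add_assoc e 1 i, hcancel, add_comm 1 i]

lemma rankLE_sum_smul_nu_add_nu {ι : Type} [Fintype ι] (hd : d ≠ 0) (α : ι → K)
    (v : ι → Fin (m + 1) → K) (j : ι) :
    RankLE d (Fintype.card ι) (∑ i, α i • nu d (v i) + nu d (v j)) := by
  classical
  have h := rankLE_sum_smul_nu hd univ (α + Pi.single j 1) v
  simpa only [Pi.add_apply, add_smul, sum_add_distrib, Pi.single_apply, ite_smul, one_smul,
    zero_smul, sum_ite_eq', mem_univ, if_true, card_univ] using h

lemma borderRankLE_crossSum [CharZero K] {w : ℕ} (E : Finset (Pm K 2)) (hw : 1 ≤ w)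
    (hd : d ≠ 0) (hwd : w ≤ d + 1) : BorderRankLE d (2 * w + #E) (crossSum d w E) := by
  obtain ⟨e, rfl⟩ := Nat.exists_eq_add_of_le' hw
  have hen : e + (d - e) = d := by omega
  obtain ⟨α, v, hD⟩ := exists_sum_nu_eq_jet_add (K := K) (Pi.single (0 : Fin 3) 1)
    (Pi.single 1 1) hen
  obtain ⟨β, u, hR⟩ := exists_sum_nu_eq_jet_add (K := K) (Pi.single (2 : Fin 3) 1)
    (Pi.single 0 1) hen
  refine borderRankLE_of_forall_ne_zero (n := d - e) (v := v + u) fun t ht => ?_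
  have hDrank := rankLE_sum_smul_nu_add_nu hd (fun j : Fin (e + 1) => t⁻¹ ^ e * α j)
    (fun j => Pi.single (0 : Fin 3) 1 + (t * j) • Pi.single 1 1) 0
  have hRrank := rankLE_sum_smul_nu hd univ (fun j : Fin (e + 1) => t⁻¹ ^ e * β j)
    (fun j => Pi.single (2 : Fin 3) 1 + (t * j) • Pi.single 0 1)
  rw [hD t ht, Fin.val_zero, Nat.cast_zero, mul_zero, zero_smul, add_zero] at hDrank
  rw [hR t ht] at hRrank
  convert (hDrank.add hRrank).add (rankLE_sum_nu_rep E) using 1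
  · simp only [Fintype.card_fin, card_univ]
    ring
  · simp only [crossSum, crossJet, Nat.add_sub_cancel, Pi.add_apply, smul_add, sum_add_distrib]
    abel

end Degeneration

section Catalecticant

variable {K : Type} [Field K] {m d a b s : ℕ} {ι : Type} [Fintype ι] [DecidableEq ι]

/-- The square submatrix of the catalecticant of `φ` given by forms of degrees `a` and `b`. -/
noncomputable def catalecticant (hab : a + b = d) (f : ι → Hd K m a) (g : ι → Hd K m b)
    (φ : Module.Dual K (Hd K m d)) : Matrix ι ι K :=
  Matrix.of fun i j => φ (mulForm ((mem_homogeneousSubmodule _ _).1 (f i).2) hab (g j))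

variable (hab : a + b = d) (f : ι → Hd K m a) (g : ι → Hd K m b)

lemma det_catalecticant_mem_polyFunctions :
    (fun φ => (catalecticant hab f g φ).det) ∈ polyFunctions K (Module.Dual K (Hd K m d)) := by
  have hdet : (fun φ => (catalecticant hab f g φ).det) = ∑ σ : Equiv.Perm ι,
      ((σ.sign : ℤ) : K) • ∏ i, fun φ : Module.Dual K (Hd K m d) =>
        catalecticant hab f g φ (σ i) i := by
    funext φ
    simp only [Matrix.det_apply', Finset.sum_apply, Pi.smul_apply, Finset.prod_apply, smul_eq_mul]
  rw [hdet]
  refine Subalgebra.sum_mem _ fun σ _ =>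
    Subalgebra.smul_mem _ (Subalgebra.prod_mem _ fun i _ => ?_) _
  exact Algebra.subset_adjoin ⟨Module.Dual.eval K _ _, rfl⟩

variable {φ : Module.Dual K (Hd K m d)}

lemma RankLE.det_catalecticant_eq_zero (h : RankLE d s φ) (hs : s < Fintype.card ι) :
    (catalecticant hab f g φ).det = 0 := by
  obtain ⟨κ, hκ, rfl⟩ := h
  have hfactor : catalecticant hab f g (veroneseSum d κ) =
      (Matrix.of fun i (p : κ.support) => κ p * eval p.1.rep (f i : PR K m)) *
        Matrix.of fun (p : κ.support) j => eval p.1.rep (g j : PR K m) := by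
    ext i j
    simp only [catalecticant, Matrix.mul_apply, Matrix.of_apply, veroneseSum_apply, evalSum_apply,
      coe_mulForm, map_mul, ← mul_assoc]
    exact (sum_coe_sort κ.support
      fun p => κ p * eval p.rep (f i : PR K m) * eval p.rep (g j : PR K m)).symm
  by_contra hdet
  have hrank := Matrix.rank_of_isUnit _ ((Matrix.isUnit_iff_isUnit_det _).2 (IsUnit.mk0 _ hdet))
  rw [hfactor] at hrank
  have hle := hrank.symm.le.trans
    ((Matrix.rank_mul_le_left _ _).trans (Matrix.rank_le_card_width _))
  rw [Fintype.card_coe] at hle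
  omega

lemma BorderRankLE.card_le (h : BorderRankLE d s φ) (hdet : (catalecticant hab f g φ).det ≠ 0) :
    Fintype.card ι ≤ s := by
  by_contra! hs
  exact hdet (h _ (det_catalecticant_mem_polyFunctions hab f g) fun ψ hψ =>
    hψ.det_catalecticant_eq_zero hab f g hs)

end Catalecticant

section BorderRankOfCross

variable {K : Type} [Field K] {d n w : ℕ} {E : Finset (Pm K 2)}

/-- `f` has the Taylor polynomials `P` and `Q` on the subschemes `A₁ ⊂ D` and `A₂ ⊂ R` of degree
`w` supported at `O` and `O'`, and the values `c` at the points of `E`. -/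
def HasRestriction (w : ℕ) (E : Finset (Pm K 2)) (f : PR K 2) (P Q : Polynomial K)
    (c : Pm K 2 → K) : Prop :=
  Polynomial.X ^ w ∣ restrictD f - P ∧ Polynomial.X ^ w ∣ restrictR f - Q ∧
    ∀ p ∈ E, eval p.rep f = c p

lemma HasRestriction.mul {f f' : PR K 2} {P P' Q Q' : Polynomial K} {c c' : Pm K 2 → K}
    (h : HasRestriction w E f P Q c) (h' : HasRestriction w E f' P' Q' c') :
    HasRestriction w E (f * f') (P * P') (Q * Q') (c * c') := by
  obtain ⟨hD, hR, hE⟩ := h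
  obtain ⟨hD', hR', hE'⟩ := h'
  refine ⟨?_, ?_, fun p hp => ?_⟩
  · rw [map_mul]
    exact dvd_mul_sub_mul hD hD'
  · rw [map_mul]
    exact dvd_mul_sub_mul hR hR'
  · rw [map_mul, hE p hp, hE' p hp, Pi.mul_apply]

lemma HasRestriction.crossSum_apply {f : Hd K 2 d} {P Q : Polynomial K} {c : Pm K 2 → K}
    (h : HasRestriction w E f P Q c) (hw : 1 ≤ w) : crossSum d w E f =
      P.coeff (w - 1) + P.coeff 0 + Q.coeff (w - 1) + ∑ p ∈ E, c p := by
  obtain ⟨hD, hR, hE⟩ := h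
  have hcoeff {u P : Polynomial K} (h : Polynomial.X ^ w ∣ u - P) {i : ℕ} (hi : i < w) :
      u.coeff i = P.coeff i :=
    sub_eq_zero.1 ((Polynomial.coeff_sub u P i).symm.trans (Polynomial.X_pow_dvd_iff.1 h i hi))
  rw [← hcoeff hD (i := w - 1) (by omega), ← hcoeff hD (i := 0) (by omega),
    ← hcoeff hR (i := w - 1) (by omega), ← sum_congr rfl hE, coeff_zero_restrictLine]
  simp only [crossSum, crossJet, LinearMap.add_apply, LinearMap.sum_apply, jet_apply, nu_apply]

lemma exists_form_separating_single (hE : ∀ p ∈ E, eval p.rep (X 1 : PR K 2) ≠ 0) {i : Fin 3}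
    (hi : i ≠ 1) : ∃ f : PR K 2, f.IsHomogeneous #E ∧ (∀ p ∈ E, eval p.rep f = 0) ∧
      eval (Pi.single i 1) f ≠ 0 := by
  refine exists_form_separating E (Pi.single_ne_zero_iff.2 one_ne_zero) (fun hmem => ?_) le_rfl
  refine hE _ hmem (eval_rep_mk_eq_zero _ (isHomogeneous_X K 1) ?_)
  rw [eval_X, Pi.single_eq_of_ne hi.symm]

lemma exists_hasRestriction_D (hE : ∀ p ∈ E, eval p.rep (X 1 : PR K 2) ≠ 0)
    (hw : 1 ≤ w) (hn : 2 * w + #E ≤ n + 1) (P : Polynomial K) :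
    ∃ f : Hd K 2 n, HasRestriction w E f P 0 0 := by
  obtain ⟨h, hh, hhE, hhO⟩ := exists_form_separating_single hE (i := 0) (by decide)
  have hN : w + #E + (n - w - #E) = n := by omega
  obtain ⟨f, hf, ⟨u, rfl⟩, hfP⟩ := exists_dvd_coeff_restrictLine_eq (K := K)
    (linearIndependent_pair_of_ne (Pi.linearIndependent_single_one (Fin 3) K)
      (i := 0) (j := 1) (by decide))
    ((isHomogeneous_X_pow 0 w).mul hh) (n := n - w - #E) (w := w)
    (by rwa [map_mul, map_pow, eval_X, Pi.single_eq_same, one_pow, one_mul]) (by omega) P.coeff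
  refine ⟨⟨_, hN ▸ hf⟩, Polynomial.X_pow_dvd_iff.2 fun i hi => ?_, ?_, ?_⟩
  · rw [Polynomial.coeff_sub, hfP i hi, sub_self]
  · rw [sub_zero, map_mul, map_mul, map_pow, restrictR_X_zero, mul_assoc]
    exact dvd_mul_right _ _
  · intro p hp
    rw [map_mul, map_mul, hhE p hp, mul_zero, zero_mul, Pi.zero_apply]

lemma exists_hasRestriction_R (hE : ∀ p ∈ E, eval p.rep (X 1 : PR K 2) ≠ 0)
    (hw : 1 ≤ w) (hn : 2 * w + #E ≤ n + 1) (Q : Polynomial K) :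
    ∃ f : Hd K 2 n, HasRestriction w E f 0 Q 0 := by
  obtain ⟨h, hh, hhE, hhO⟩ := exists_form_separating_single hE (i := 2) (by decide)
  have hN : 1 + #E + (n - 1 - #E) = n := by omega
  obtain ⟨f, hf, ⟨u, rfl⟩, hfQ⟩ := exists_dvd_coeff_restrictLine_eq (K := K)
    (linearIndependent_pair_of_ne (Pi.linearIndependent_single_one (Fin 3) K)
      (i := 2) (j := 0) (by decide))
    ((isHomogeneous_X K 2).mul hh) (n := n - 1 - #E) (w := w)
    (by rwa [map_mul, eval_X, Pi.single_eq_same, one_mul]) (by omega) Q.coeff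
  refine ⟨⟨_, hN ▸ hf⟩, ?_, Polynomial.X_pow_dvd_iff.2 fun i hi => ?_, ?_⟩
  · rw [map_mul, map_mul, restrictD_X_two, zero_mul, zero_mul, sub_zero]
    exact dvd_zero _
  · rw [Polynomial.coeff_sub, hfQ i hi, sub_self]
  · intro p hp
    rw [map_mul, map_mul, hhE p hp, mul_zero, zero_mul, Pi.zero_apply]

lemma exists_hasRestriction_single [DecidableEq (Pm K 2)]
    (hE : ∀ p ∈ E, eval p.rep (X 1 * X 2 : PR K 2) ≠ 0) (hn : #E + 1 ≤ n) {q : Pm K 2}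
    (hq : q ∈ E) : ∃ f : Hd K 2 n, HasRestriction w E f 0 0 (Pi.single q 1) := by
  obtain ⟨h, hh, hh0, hhq⟩ := exists_form_eval_eq_zero_of_ne hq (n := n - 2) (by omega)
  have hcard := card_pos.2 ⟨q, hq⟩
  refine ⟨(eval q.rep (X 1 * X 2 * h))⁻¹ • mulForm ((isHomogeneous_X K 1).mul (isHomogeneous_X K 2))
    (by omega) ⟨h, (mem_homogeneousSubmodule _ _).2 hh⟩, ?_, ?_, fun p hp => ?_⟩
  · simp only [Submodule.coe_smul, coe_mulForm, map_smul, map_mul, restrictD_X_two, mul_zero,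
      zero_mul, smul_zero, sub_zero, dvd_zero]
  · simp only [Submodule.coe_smul, coe_mulForm, map_smul, map_mul, restrictR_X_one, zero_mul,
      smul_zero, sub_zero, dvd_zero]
  · rw [Submodule.coe_smul, coe_mulForm, smul_eval]
    rcases eq_or_ne p q with rfl | hpq
    · rw [Pi.single_eq_same, inv_mul_cancel₀ (by rw [map_mul]; exact mul_ne_zero (hE p hp) hhq)]
    · rw [map_mul (eval p.rep), hh0 p hp hpq, mul_zero, mul_zero, Pi.single_eq_of_ne hpq]

lemma exists_hasRestriction_sumElim [DecidableEq (Pm K 2)]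
    (hE : ∀ p ∈ E, eval p.rep (X 1 * X 2 : PR K 2) ≠ 0) (hw : 1 ≤ w) (hn : 2 * w + #E ≤ n + 1)
    (P Q : Fin w → Polynomial K) (i : Fin w ⊕ Fin w ⊕ E) :
    ∃ f : Hd K 2 n, HasRestriction w E f (Sum.elim P 0 i) (Sum.elim 0 (Sum.elim Q 0) i)
      (Sum.elim 0 (Sum.elim 0 fun q : E => Pi.single (q : Pm K 2) 1) i) := by
  have hE1 (p : Pm K 2) (hp : p ∈ E) : eval p.rep (X 1 : PR K 2) ≠ 0 :=
    left_ne_zero_of_mul (b := eval p.rep (X 2)) (by rw [← map_mul]; exact hE p hp)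
  rcases i with i | i | q
  · exact exists_hasRestriction_D hE1 hw hn (P i)
  · exact exists_hasRestriction_R hE1 hw hn (Q i)
  · exact exists_hasRestriction_single hE (by omega) q.2

/-- Modulo `X ^ w` the polynomial `1 - X ^ (w - 1)` inverts `1 + X ^ (w - 1)`, and
`coeff (w - 1) + coeff 0` is `coeff (w - 1)` after multiplication by `1 + X ^ (w - 1)`. -/
lemma coeff_add_coeff_zero_X_pow_mul (hw : 2 ≤ w) (i j : Fin w) :
    (Polynomial.X ^ (i : ℕ) * (Polynomial.X ^ (w - 1 - j) * (1 - Polynomial.X ^ (w - 1))) :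
        Polynomial K).coeff (w - 1) +
      (Polynomial.X ^ (i : ℕ) * (Polynomial.X ^ (w - 1 - j) * (1 - Polynomial.X ^ (w - 1))) :
        Polynomial K).coeff 0 = if i = j then 1 else 0 := by
  have hexp : (Polynomial.X ^ (i : ℕ) *
      (Polynomial.X ^ (w - 1 - j) * (1 - Polynomial.X ^ (w - 1))) : Polynomial K) =
      Polynomial.X ^ (i + (w - 1 - j)) - Polynomial.X ^ (i + (w - 1 - j) + (w - 1)) := by ring
  simp only [hexp, Polynomial.coeff_sub, Polynomial.coeff_X_pow, Fin.ext_iff]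
  split_ifs <;> first | omega | ring

lemma exists_catalecticant_crossSum_eq_one [DecidableEq (Pm K 2)] {a b : ℕ} (hab : a + b = d)
    (hE : ∀ p ∈ E, eval p.rep (X 1 * X 2 : PR K 2) ≠ 0) (hw : 2 ≤ w) (ha : 2 * w + #E ≤ a + 1)
    (hb : 2 * w + #E ≤ b + 1) : ∃ (f : Fin w ⊕ Fin w ⊕ E → Hd K 2 a)
      (g : Fin w ⊕ Fin w ⊕ E → Hd K 2 b), catalecticant hab f g (crossSum d w E) = 1 := by
  choose f hf using exists_hasRestriction_sumElim hE (by omega) ha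
    (fun i : Fin w => Polynomial.X ^ (i : ℕ)) fun i => Polynomial.X ^ (i : ℕ)
  choose g hg using exists_hasRestriction_sumElim hE (by omega) hb
    (fun j : Fin w => Polynomial.X ^ (w - 1 - j) * (1 - Polynomial.X ^ (w - 1)))
    fun j => Polynomial.X ^ (w - 1 - j)
  refine ⟨f, g, Matrix.ext fun i j => ?_⟩
  have hcoeff (i j : Fin w) : (Polynomial.X ^ (i : ℕ) * Polynomial.X ^ (w - 1 - j) :
      Polynomial K).coeff (w - 1) = if i = j then 1 else 0 := by
    simp only [← pow_add, Polynomial.coeff_X_pow, Fin.ext_iff]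
    split_ifs <;> first | omega | rfl
  have hentry := ((hf i).mul (hg j)).crossSum_apply
    (f := mulForm ((mem_homogeneousSubmodule _ _).1 (f i).2) hab (g j)) (by omega)
  refine hentry.trans ?_
  rcases i with i | i | p <;> rcases j with j | j | q
  case inl.inl => simpa [Matrix.one_apply] using coeff_add_coeff_zero_X_pow_mul (K := K) hw i j
  case inr.inr.inr.inr =>
    rcases eq_or_ne p q with rfl | hpq
    · simp [Pi.single_apply]
    · simp [Pi.single_apply, hpq, hpq.symm]
  all_goals simp [Matrix.one_apply, hcoeff]

lemma BorderRankLE.two_mul_add_card_le {s : ℕ} (h : BorderRankLE d s (crossSum d w E))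
    (hw : 2 ≤ w) (hd : 4 * w + 2 * #E ≤ d + 2)
    (hE : ∀ p ∈ E, eval p.rep (X 1 * X 2 : PR K 2) ≠ 0) : 2 * w + #E ≤ s := by
  classical
  have hab : (2 * w + #E - 1) + (d + 1 - (2 * w + #E)) = d := by omega
  obtain ⟨f, g, hone⟩ := exists_catalecticant_crossSum_eq_one hab hE hw (by omega) (by omega)
  have hcard := h.card_le hab f g (by rw [hone, Matrix.det_one]; exact one_ne_zero)
  simp only [Fintype.card_sum, Fintype.card_fin, Fintype.card_coe] at hcard
  omega

end BorderRankOfCross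

section LineSchemes

variable {K : Type} [Field K] {m : ℕ} {I : Ideal (PR K m)}

lemma mem_of_forall_mem_span_X_pow_mul_mem (hI : IsSatI I) {L : ℕ} {h : PR K m}
    (hL : ∀ z ∈ Ideal.span (Set.range (X : Fin (m + 1) → PR K m)) ^ L, z * h ∈ I) : h ∈ I := by
  induction L generalizing h with
  | zero => simpa only [one_mul] using hL 1 (by rw [pow_zero, Ideal.one_eq_top]; trivial)
  | succ L ih =>
    refine hI h fun i => ih fun z hz => ?_
    rw [← mul_assoc]
    refine hL _ ?_
    rw [pow_succ]
    exact Ideal.mul_mem_mul hz (Ideal.subset_span ⟨i, rfl⟩)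

lemma mem_of_mul_mem_of_eval_ne_zero [IsAlgClosed K] (hIh : IsHomogI I) (hI : IsSatI I)
    {g h : PR K m} {n : ℕ} (hg : g.IsHomogeneous n)
    (hgI : ∀ a ∈ pzeroLocus I, eval a.rep g ≠ 0) (hgh : g * h ∈ I) : h ∈ I := by
  have hrad : Ideal.span (Set.range (X : Fin (m + 1) → PR K m)) ≤
      (I ⊔ Ideal.span {g}).radical := by
    rw [← vanishingIdeal_zeroLocus_eq_radical (K := K), Ideal.span_le]
    rintro _ ⟨j, rfl⟩
    rw [SetLike.mem_coe, mem_vanishingIdeal_iff]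
    intro z hz
    rw [mem_zeroLocus_iff] at hz
    suffices z = 0 by rw [this, aeval_X, Pi.zero_apply]
    by_contra hz0
    have hvanish {f : PR K m} (hf : f ∈ I ⊔ Ideal.span {g}) {k : ℕ} (hfk : f.IsHomogeneous k) :
        eval (Projectivization.mk K z hz0).rep f = 0 :=
      eval_rep_mk_eq_zero hz0 hfk (by rw [← aeval_eq_eval]; exact hz f hf)
    exact hgI _ (fun f hf k => hvanish (Ideal.mem_sup_left (hIh f hf k))
      (homogeneousComponent_isHomogeneous k f))
      (hvanish (Ideal.mem_sup_right (Ideal.mem_span_singleton_self g)) hg)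
  obtain ⟨L, hL⟩ := Ideal.exists_pow_le_of_le_radical_of_fg hrad
    (Submodule.fg_span (Set.finite_range _))
  refine mem_of_forall_mem_span_X_pow_mul_mem hI (L := L) fun z hz => ?_
  obtain ⟨a, ha, b, hb, rfl⟩ := Submodule.mem_sup.1 (hL hz)
  obtain ⟨c, rfl⟩ := Ideal.mem_span_singleton'.1 hb
  rw [add_mul, mul_assoc]
  exact I.add_mem (I.mul_mem_right h ha) (I.mul_mem_left c hgh)

lemma mem_idealOfSet_of_restrictLine_eq_zero [Infinite K] {p q : Fin (m + 1) → K} {f : PR K m}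
    {n : ℕ} (hf : f.IsHomogeneous n) (h : restrictLine p q f = 0) :
    f ∈ idealOfSet {a : Pm K m | a.submodule ≤ Submodule.span K {p, q}} := by
  refine Ideal.subset_span ⟨⟨n, hf⟩, fun a ha => ?_⟩
  obtain ⟨x, y, hxy⟩ := Submodule.mem_span_pair.1
    (ha (a.submodule_eq ▸ Submodule.mem_span_singleton_self a.rep))
  rw [← hxy, eval_add_eq_zero_of_restrictLine_eq_zero hf h]

variable {p q : Fin (m + 1) → K}

lemma exists_sub_pow_mul_mem [Infinite K] (hpq : LinearIndependent K ![p, q])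
    (hline : idealOfSet {a : Pm K m | a.submodule ≤ Submodule.span K {p, q}} ≤ I) {y h : PR K m}
    (hy : y.IsHomogeneous 1) (hyX : restrictLine p q y = Polynomial.X) {t v : ℕ}
    (hh : h.IsHomogeneous t) {u : Polynomial K} (hu : restrictLine p q h = Polynomial.X ^ v * u) :
    ∃ g : PR K m, g.IsHomogeneous (t - v) ∧ restrictLine p q g = u ∧ h - y ^ v * g ∈ I := by
  rcases eq_or_ne u 0 with rfl | hu0
  · refine ⟨0, isHomogeneous_zero _ _ _, map_zero _, hline ?_⟩
    rw [mul_zero, sub_zero]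
    exact mem_idealOfSet_of_restrictLine_eq_zero hh (by rw [hu, mul_zero])
  · have hdeg := natDegree_restrictLine_le p q hh
    rw [hu, Polynomial.natDegree_mul (pow_ne_zero v Polynomial.X_ne_zero) hu0,
      Polynomial.natDegree_X_pow] at hdeg
    obtain ⟨g, hg, hgu⟩ := exists_restrictLine_eq hpq (u := u) (n := t - v) (by omega)
    have hyg : (y ^ v * g).IsHomogeneous t := by
      convert (hy.pow v).mul hg using 1
      omega
    refine ⟨g, hg, hgu, hline (mem_idealOfSet_of_restrictLine_eq_zero (hh.sub hyg) ?_)⟩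
    rw [map_sub, map_mul, map_pow, hyX, hgu, hu, sub_self]

lemma hilbQ_le_of_forall_coeff_eq_zero {t v : ℕ}
    (h : ∀ f : PR K m, f.IsHomogeneous t → (∀ i < v, (restrictLine p q f).coeff i = 0) → f ∈ I) :
    hilbQ I t ≤ v := by
  let quot : Hd K m t →ₗ[K] PR K m ⧸ I :=
    (Ideal.Quotient.mkₐ K I).toLinearMap ∘ₗ (Hd K m t).subtype
  let jets : Hd K m t →ₗ[K] Fin v → K := LinearMap.pi fun i => jet t p q i
  have hker : LinearMap.ker jets ≤ LinearMap.ker quot := fun f hf =>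
    Ideal.Quotient.eq_zero_iff_mem.2 (h f f.2 fun i hi => congrFun hf ⟨i, hi⟩)
  have hquot : hilbQ I t = Module.finrank K (LinearMap.range quot) := by
    rw [hilbQ, LinearMap.range_comp, Submodule.range_subtype]
  have hjets := (Submodule.finrank_le (LinearMap.range jets)).trans_eq (Module.finrank_fin_fun K)
  have := LinearMap.finrank_range_add_finrank_ker quot
  have := LinearMap.finrank_range_add_finrank_ker jets
  have := Submodule.finrank_mono hker
  omega

lemma idealDeg_le_of_pow_mem [Infinite K] (hpq : LinearIndependent K ![p, q])
    (hline : idealOfSet {a : Pm K m | a.submodule ≤ Submodule.span K {p, q}} ≤ I) {y : PR K m}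
    (hy : y.IsHomogeneous 1) (hyX : restrictLine p q y = Polynomial.X) {v : ℕ} (hyI : y ^ v ∈ I) :
    idealDeg I ≤ v := by
  refine Filter.limsup_le_of_le (h := .of_forall fun t => ?_)
  refine hilbQ_le_of_forall_coeff_eq_zero (p := p) (q := q) fun h hh hcoeff => ?_
  obtain ⟨u, hu⟩ := Polynomial.X_pow_dvd_iff.2 hcoeff
  obtain ⟨g, -, -, hgI⟩ := exists_sub_pow_mul_mem hpq hline hy hyX hh hu
  exact (I.sub_mem_iff_left (I.mul_mem_right g hyI)).1 hgI

lemma jet_mem_schemeSpanSub [IsAlgClosed K] (hIh : IsHomogI I) (hI : IsSatI I) {O : Pm K m}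
    (hO : pzeroLocus I ⊆ {O}) (hOq : LinearIndependent K ![O.rep, q])
    (hline : idealOfSet {a : Pm K m | a.submodule ≤ Submodule.span K {O.rep, q}} ≤ I) {d i : ℕ}
    (hi : i < idealDeg I) : jet d O.rep q i ∈ schemeSpanSub I d := by
  intro f hfI
  have : Infinite K := IsAlgClosed.instInfinite
  rw [jet_apply]
  rcases eq_or_ne (restrictLine O.rep q (f : PR K m)) 0 with h0 | h0
  · rw [h0, Polynomial.coeff_zero]
  obtain ⟨y, hy, hyX⟩ := exists_restrictLine_eq hOq Polynomial.natDegree_X_le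
  obtain ⟨v, -, u, hu, hu0⟩ := exists_eq_X_pow_mul h0
  obtain ⟨g, hg, hgu, hfg⟩ := exists_sub_pow_mul_mem hOq hline hy hyX f.2 hu
  have hgy : g * y ^ v ∈ I := mul_comm g _ ▸ (I.sub_mem_iff_right hfI).1 hfg
  have hgO : ∀ a ∈ pzeroLocus I, eval a.rep g ≠ 0 := fun a ha => by
    rwa [hO ha, ← coeff_zero_restrictLine O.rep q, hgu]
  have hle := idealDeg_le_of_pow_mem hOq hline hy hyX
    (mem_of_mul_mem_of_eval_ne_zero hIh hI hg hgO hgy)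
  exact Polynomial.X_pow_dvd_iff.1 ⟨u, hu⟩ i (hi.trans_le hle)

lemma schemeSpanSub_anti {J : Ideal (PR K m)} (hIJ : I ≤ J) (d : ℕ) :
    schemeSpanSub J d ≤ schemeSpanSub I d :=
  fun _ hφ f hf => hφ f (hIJ hf)

lemma nu_mem_schemeSpanSub_idealOfSet {S : Set (Pm K m)} {a : Pm K m} (ha : a ∈ S)
    {v : Fin (m + 1) → K} (hv : v ∈ a.submodule) (d : ℕ) :
    nu d v ∈ schemeSpanSub (idealOfSet S) d := by
  have hle : idealOfSet S ≤ RingHom.ker (eval a.rep) := Ideal.span_le.2 fun g hg => hg.2 a ha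
  rw [a.submodule_eq] at hv
  obtain ⟨c, rfl⟩ := Submodule.mem_span_singleton.1 hv
  rw [nu_smul]
  exact Submodule.smul_mem _ _ fun f hf => (nu_apply a.rep f).trans (hle hf)

lemma inSpanI_mk {d : ℕ} {φ : Module.Dual K (Hd K m d)} (hφ : φ ≠ 0)
    (h : φ ∈ schemeSpanSub I d) : inSpanI I d (Projectivization.mk K φ hφ) := by
  obtain ⟨a, ha⟩ := Projectivization.exists_smul_eq_mk_rep K φ hφ
  rw [inSpanI, ← ha]
  exact Submodule.smul_mem _ _ h

end LineSchemes

section Frames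

variable {K : Type} [Field K] {m : ℕ}

lemma submodule_le_iff_rep_mem {a : Pm K m} {W : Submodule K (Fin (m + 1) → K)} :
    a.submodule ≤ W ↔ a.rep ∈ W := by
  rw [a.submodule_eq, Submodule.span_singleton_le_iff_mem]

lemma span_pair_eq_of_finrank_eq_two {V : Type} [AddCommGroup V] [Module K V] {W : Submodule K V}
    (hW : Module.finrank K W = 2) {a b : V} (hab : LinearIndependent K ![a, b]) (ha : a ∈ W)
    (hb : b ∈ W) : Submodule.span K {a, b} = W := by
  have : FiniteDimensional K W := .of_finrank_pos (by omega)
  refine Submodule.eq_of_le_of_finrank_eq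
    (Submodule.span_le.2 (Set.insert_subset ha (Set.singleton_subset_iff.2 hb))) ?_
  rw [hW, ← Matrix.range_cons_cons_empty a b ![], finrank_span_eq_card hab, Fintype.card_fin]

lemma exists_frame {WD WR : Submodule K (Fin (m + 1) → K)} (hWD : Module.finrank K WD = 2)
    (hWR : Module.finrank K WR = 2) {O O' : Pm K m}
    (hO : {a : Pm K m | a.submodule ≤ WD} ∩ {a : Pm K m | a.submodule ≤ WR} = {O})
    (hO'R : O'.submodule ≤ WR) (hO'O : O' ≠ O) :
    ∃ q, LinearIndependent K ![O.rep, q, O'.rep] ∧ WD = Submodule.span K {O.rep, q} ∧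
      WR = Submodule.span K {O'.rep, O.rep} := by
  obtain ⟨hOD, hOR⟩ : O.submodule ≤ WD ∧ O.submodule ≤ WR := hO.ge rfl
  have hO'D : O'.rep ∉ WD := fun h => hO'O (hO.le ⟨submodule_le_iff_rep_mem.2 h, hO'R⟩)
  rw [submodule_le_iff_rep_mem] at hOD hOR hO'R
  obtain ⟨q, hOq⟩ := exists_linearIndependent_pair_of_one_lt_finrank (R := K) (M := WD)
    (by omega) (x := ⟨O.rep, hOD⟩) (fun h => O.rep_nonzero (congrArg Subtype.val h))
  replace hOq : LinearIndependent K ![O.rep, q] := by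
    rw [LinearIndependent.pair_iff] at hOq ⊢
    exact fun s t h => hOq s t (Subtype.ext h)
  have hWDq := span_pair_eq_of_finrank_eq_two hWD hOq hOD q.2
  have hO'O' : LinearIndependent K ![O'.rep, O.rep] := by
    rw [LinearIndependent.pair_symm_iff, LinearIndependent.pair_iff' O.rep_nonzero]
    exact fun c hc => hO'D (hc ▸ WD.smul_mem c hOD)
  refine ⟨q, ?_, hWDq.symm, (span_pair_eq_of_finrank_eq_two hWR hO'O' hO'R hOR).symm⟩
  have hsnoc : ![O.rep, (q : Fin (m + 1) → K), O'.rep] = Fin.snoc ![O.rep, (q : _)] O'.rep := by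
    ext i : 1
    fin_cases i <;> rfl
  rw [hsnoc, linearIndependent_finSnoc, Matrix.range_cons_cons_empty, hWDq]
  exact ⟨hOq, hO'D⟩

lemma span_range_vec_three {V : Type} [AddCommGroup V] [Module K V] (a b c : V) :
    Submodule.span K (Set.range ![a, b, c]) =
      Submodule.span K {a, b} ⊔ Submodule.span K {c, a} := by
  rw [← Submodule.span_union, Matrix.range_cons, Matrix.range_cons_cons_empty]
  congr 1
  ext x
  simp only [Set.mem_union, Set.mem_insert_iff, Set.mem_singleton_iff]
  tauto

lemma generallyOn_of_forall_map {u : Fin 3 → Fin (m + 1) → K}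
    {W : Submodule K (Fin (m + 1) → K)} (hu : Submodule.span K (Set.range u) = W) {k : ℕ}
    {Φ : (Fin k → Pm K m) → Prop}
    (h : ∀ (e' : Fin k → Pm K 2) (e : Fin k → Pm K m),
      (∀ i, eval (e' i).rep (X 1 * X 2 : PR K 2) ≠ 0) →
      (∀ i, (e i).submodule = (e' i).submodule.map (Fintype.linearCombination K u)) → Φ e) :
    GenerallyOn W k Φ := by
  refine ⟨fun j => ⟨u j, hu ▸ Submodule.subset_span ⟨j, rfl⟩⟩, hu, ∏ i, (X (i, 1) * X (i, 2)),
    prod_ne_zero_iff.2 fun i _ => mul_ne_zero (X_ne_zero _) (X_ne_zero _), fun c hc e he => ?_⟩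
  have hc12 (i : Fin k) : c i 1 * c i 2 ≠ 0 := by
    simp only [map_prod, map_mul, eval_X] at hc
    exact prod_ne_zero_iff.1 hc i (mem_univ i)
  have hc0 (i : Fin k) : c i ≠ 0 := fun h0 => hc12 i (by rw [h0, Pi.zero_apply, zero_mul])
  refine h (fun i => Projectivization.mk K (c i) (hc0 i)) e (fun i => ?_) fun i => ?_
  · obtain ⟨a, ha⟩ := Projectivization.exists_smul_eq_mk_rep K (c i) (hc0 i)
    rw [← ha, Units.smul_def, eval_smul_of_isHomogeneous
      ((isHomogeneous_X K (1 : Fin 3)).mul (isHomogeneous_X K 2)), map_mul, eval_X, eval_X]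
    exact mul_ne_zero (pow_ne_zero _ a.ne_zero) (hc12 i)
  · rw [he, Projectivization.submodule_mk, Submodule.map_span, Set.image_singleton,
      Fintype.linearCombination_apply]

lemma generallyOn_of_forall_finset {u : Fin 3 → Fin (m + 1) → K}
    {W : Submodule K (Fin (m + 1) → K)} (hu : Submodule.span K (Set.range u) = W) {k : ℕ}
    {Φ : (Fin k → Pm K m) → Prop}
    (h : ∀ (e : Fin k → Pm K m) (E : Finset (Pm K 2)), #E = k →
      (∀ p ∈ E, eval p.rep (X 1 * X 2 : PR K 2) ≠ 0) →
      (∀ p ∈ E, ∃ a ∈ Set.range e, Fintype.linearCombination K u p.rep ∈ a.submodule) → Φ e) :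
    GenerallyOn W k fun e => Function.Injective e → Φ e := by
  classical
  refine generallyOn_of_forall_map hu fun e' e he' he hinj =>
    h e (univ.image e') ?_ (by simpa using he') fun p hp => ?_
  · have hinj' : Function.Injective e' := fun i j hij =>
      hinj (Projectivization.submodule_injective (by rw [he, he, hij]))
    rw [card_image_of_injective _ hinj', card_fin]
  · obtain ⟨i, -, rfl⟩ := mem_image.1 hp
    exact ⟨e i, ⟨i, rfl⟩, he i ▸ Submodule.mem_map_of_mem (submodule_le_iff_rep_mem.1 le_rfl)⟩

end Frames

section Transfer

variable {K : Type} [Field K] {m d w : ℕ} {E : Finset (Pm K 2)}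
  {L : (Fin 3 → K) →ₗ[K] (Fin (m + 1) → K)}

lemma pushforward_crossSum (L : (Fin 3 → K) →ₗ[K] (Fin (m + 1) → K)) :
    pushforward L d (crossSum d w E) =
      jet d (L (Pi.single 0 1)) (L (Pi.single 1 1)) (w - 1) + nu d (L (Pi.single 0 1)) +
        jet d (L (Pi.single 2 1)) (L (Pi.single 0 1)) (w - 1) + ∑ p ∈ E, nu d (L p.rep) := by
  simp only [crossSum, crossJet, map_add, map_sum, pushforward_jet, pushforward_nu]

lemma pushforward_crossSum_mem_schemeSpanSub (hw : 1 ≤ w) {I J : Ideal (PR K m)}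
    {S : Set (Pm K m)}
    (hI : ∀ i < w, jet d (L (Pi.single 0 1)) (L (Pi.single 1 1)) i ∈ schemeSpanSub I d)
    (hJ : jet d (L (Pi.single 2 1)) (L (Pi.single 0 1)) (w - 1) ∈ schemeSpanSub J d)
    (hS : ∀ p ∈ E, ∃ a ∈ S, L p.rep ∈ a.submodule) :
    pushforward L d (crossSum d w E) ∈ schemeSpanSub (I ⊓ J ⊓ idealOfSet S) d := by
  rw [pushforward_crossSum, ← jet_zero _ (L (Pi.single 1 1))]
  refine add_mem (add_mem (add_mem ?_ ?_) ?_) (sum_mem fun p hp => ?_)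
  · exact schemeSpanSub_anti (inf_le_left.trans inf_le_left) d (hI (w - 1) (by omega))
  · exact schemeSpanSub_anti (inf_le_left.trans inf_le_left) d (hI 0 hw)
  · exact schemeSpanSub_anti (inf_le_left.trans inf_le_right) d hJ
  · obtain ⟨a, ha, hpa⟩ := hS p hp
    exact schemeSpanSub_anti inf_le_right d (nu_mem_schemeSpanSub_idealOfSet ha hpa d)

variable [IsAlgClosed K] {L' : (Fin (m + 1) → K) →ₗ[K] (Fin 3 → K)}

lemma pushforward_crossSum_ne_zero (hL : L' ∘ₗ L = LinearMap.id) (hw : 3 ≤ w)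
    (hd : 4 * w + 2 * #E ≤ d + 1) (hE : ∀ p ∈ E, eval p.rep (X 1 * X 2 : PR K 2) ≠ 0) :
    pushforward L d (crossSum d w E) ≠ 0 := by
  have : Infinite K := IsAlgClosed.instInfinite
  intro h
  have h0 : crossSum d w E = 0 := by rw [← pushforward_leftInverse hL (crossSum d w E), h, map_zero]
  have hrank : RankLE d 0 (crossSum d w E) := h0 ▸ rankLE_zero
  have := hrank.two_mul_add_three_le hw hd hE
  omega

variable [CharZero K]

lemma srank_mk_pushforward_crossSum (hL : L' ∘ₗ L = LinearMap.id) (hw : 3 ≤ w)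
    (hd : 4 * w + 2 * #E ≤ d + 1) (hE : ∀ p ∈ E, eval p.rep (X 1 * X 2 : PR K 2) ≠ 0)
    (hφ : pushforward L d (crossSum d w E) ≠ 0) :
    srank d (Projectivization.mk K _ hφ) = 2 * d + 3 + #E - 2 * w := by
  have : Infinite K := IsAlgClosed.instInfinite
  refine srank_mk hφ ((rankLE_crossSum (by omega) (by omega)).pushforward (by omega) L)
    fun n h => ?_
  have hn := h.pushforward (by omega) L'
  rw [pushforward_leftInverse hL] at hn
  have := hn.two_mul_add_three_le hw hd hE
  omega

lemma brank_mk_pushforward_crossSum (hL : L' ∘ₗ L = LinearMap.id) (hw : 2 ≤ w)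
    (hd : 4 * w + 2 * #E ≤ d + 2) (hE : ∀ p ∈ E, eval p.rep (X 1 * X 2 : PR K 2) ≠ 0)
    (hφ : pushforward L d (crossSum d w E) ≠ 0) :
    brank d (Projectivization.mk K _ hφ) = 2 * w + #E := by
  have : Infinite K := IsAlgClosed.instInfinite
  refine brank_mk hφ (by omega) ((borderRankLE_crossSum E (by omega) (by omega) (by omega)).map
    fun ψ hψ => hψ.pushforward (by omega) L) fun n h => ?_
  have hn := h.map (T := pushforward L' d) fun ψ hψ => hψ.pushforward (by omega) L'
  rw [pushforward_leftInverse hL] at hn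
  exact hn.two_mul_add_card_le hw hd hE

lemma exists_brank_eq_and_srank_eq {u : Fin 3 → Fin (m + 1) → K} (hu : LinearIndependent K u)
    (hw : 3 ≤ w) (hd : 4 * w + 2 * #E ≤ d + 1)
    (hE : ∀ p ∈ E, eval p.rep (X 1 * X 2 : PR K 2) ≠ 0) {I J : Ideal (PR K m)} {S : Set (Pm K m)}
    (hI : ∀ i < w, jet d (u 0) (u 1) i ∈ schemeSpanSub I d)
    (hJ : jet d (u 2) (u 0) (w - 1) ∈ schemeSpanSub J d)
    (hS : ∀ p ∈ E, ∃ a ∈ S, Fintype.linearCombination K u p.rep ∈ a.submodule) :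
    ∃ P : PN K m d, inSpanI (I ⊓ J ⊓ idealOfSet S) d P ∧ brank d P = 2 * w + #E ∧
      srank d P = 2 * d + 3 + #E - 2 * w := by
  obtain ⟨L', hL⟩ := (Fintype.linearCombination K u).exists_leftInverse_of_injective
    (LinearMap.ker_eq_bot.2 (linearIndependent_iff_injective_fintypeLinearCombination.1 hu))
  have hLu (i : Fin 3) : Fintype.linearCombination K u (Pi.single i 1) = u i :=
    (Fintype.linearCombination_apply_single K u i 1).trans (one_smul K _)
  have hφ := pushforward_crossSum_ne_zero hL hw hd hE
  refine ⟨.mk K _ hφ, inSpanI_mk hφ (pushforward_crossSum_mem_schemeSpanSub (by omega) ?_ ?_ hS),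
    brank_mk_pushforward_crossSum hL (by omega) (by omega) hE hφ,
    srank_mk_pushforward_crossSum hL hw hd hE hφ⟩
  · rwa [hLu, hLu]
  · rwa [hLu, hLu]

end Transfer

end Veronese

open Veronese

/-- Lemma 8 (`o3`): with `w ≥ 3`, `s ≥ 2w`, `d ≥ 2s-1`, distinct coplanar lines `D, R`
meeting at `O` spanning the plane `U`, `A₁ ⊂ D` the degree-`w` divisor supported at `O`,
`A₂ ⊂ R` the degree-`w` divisor supported at `O' ∈ R ∖ {O}`, and a general subset `E ⊂ U`
of cardinality `s - 2w`: there is `P ∈ ⟨ν_d(A₁ ∪ A₂ ∪ E)⟩` with `br(P) = s` and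
`sr(P) = 2d+3+s-4w`. -/
theorem stmt10 (K : Type) [Field K] [IsAlgClosed K] [CharZero K]
    (m w s d : ℕ) (hm : 2 ≤ m) (hw : 3 ≤ w) (hs : 2 * w ≤ s) (hd : 2 * s ≤ d + 1)
    (WD WR : Submodule K (Fin (m+1) → K))
    (hWD : Module.finrank K WD = 2) (hWR : Module.finrank K WR = 2) (hDR : WD ≠ WR)
    (O : Pm K m)
    (hO : {a : Pm K m | a.submodule ≤ WD} ∩ {a : Pm K m | a.submodule ≤ WR} = {O})
    (A1 : PSub K m) (hA1D : idealOfSet {a : Pm K m | a.submodule ≤ WD} ≤ A1.I)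
    (hA1z : IsZeroDimI A1.I) (hA1deg : idealDeg A1.I = w) (hA1sup : pzeroLocus A1.I = {O})
    (O' : Pm K m) (hO'R : O'.submodule ≤ WR) (hO'O : O' ≠ O)
    (A2 : PSub K m) (hA2R : idealOfSet {a : Pm K m | a.submodule ≤ WR} ≤ A2.I)
    (hA2z : IsZeroDimI A2.I) (hA2deg : idealDeg A2.I = w) (hA2sup : pzeroLocus A2.I = {O'}) :
    GenerallyOn (WD ⊔ WR) (s - 2 * w) (fun e =>
      Function.Injective e →
        ∃ P : PN K m d,
          inSpanI (A1.I ⊓ A2.I ⊓ idealOfSet (Set.range e)) d P ∧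
          brank d P = s ∧ srank d P + 4 * w = 2 * d + 3 + s) := by
  obtain ⟨q, hu, rfl, rfl⟩ := exists_frame hWD hWR hO hO'R hO'O
  refine generallyOn_of_forall_finset (span_range_vec_three O.rep q O'.rep)
    fun e E hcard hE he => ?_
  have hOq := linearIndependent_pair_of_ne hu (i := 0) (j := 1) (by decide)
  have hO'_O := linearIndependent_pair_of_ne hu (i := 2) (j := 0) (by decide)
  have hjetD (i : ℕ) (hi : i < w) : jet d O.rep q i ∈ schemeSpanSub A1.I d :=
    jet_mem_schemeSpanSub A1.homog A1.sat hA1sup.le hOq hA1D (by omega)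
  have hjetR : jet d O'.rep O.rep (w - 1) ∈ schemeSpanSub A2.I d :=
    jet_mem_schemeSpanSub A2.homog A2.sat hA2sup.le hO'_O hA2R (by omega)
  obtain ⟨P, hP, hbr, hsr⟩ :=
    exists_brank_eq_and_srank_eq hu hw (by omega) hE hjetD hjetR he
  exact ⟨P, hP, by omega, by omega⟩
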